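/- arXiv:math/0503257 — 2 statements merged into one kernel-verified Lean document; each statement's English description precedes it below -/
import Mathlib

section
/- Let f be an r×m matrix (r ≤ m) of holomorphic functions on an open set in ℂⁿ and let Z be the set of points where f is not surjective (equivalently, where all r×r minors vanish). Then if Z is a proper analytic subset, its codimension is at most m−r+1. -/
open Filter Complex
open scoped ENNReal

attribute [local instance] Classical.propDecidable

/-!
Transposition turns failure of surjectivity into failure of injectivity, so let `A z : X → F` be a
holomorphic family of linear maps with singular locus `Z = {z | A z is not injective}`.

Maximum principle: if `dim F + 1 < dim E + dim X`, then every holomorphic `g` on a bounded open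
set satisfies `‖g z₀‖ ≤ max ‖g‖` for `z₀ ∈ Z`, the maximum being over the part of `Z` on the
frontier. Otherwise, for small `ε`, the function `ε ‖e z‖² + ‖g z‖² - ε⁻¹ ‖A z x‖⁴` on `‖x‖ = 1`,
with `e` linear and injective, would attain its maximum at an interior point. There `A z x = 0`, or
by a dimension count the derivative of `A z x` vanishes along some `(v, ξ)` with `ξ ⟂ x` and
`v ≠ 0`. Either way the penalty is the real part of a holomorphic function up to `o(|t|²)` on this
complex line, while the first term is strictly subharmonic and the second subharmonic on it: a
contradiction.

Applied with `g = (t - 1)⁻¹`, the maximum principle shows that a linear projection `π : E → W`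
which isolates a point of `Z` in its fibre maps `Z` onto a neighbourhood of the image, provided
`dim F < dim ker π + dim X`. If the Hausdorff dimension of `Z` were less than `2d`, a generic
projection to `ℂᵈ` would isolate the point, and the image of `Z`, having nonempty interior, would
have dimension `2d`.
-/

open Set Module Metric Asymptotics
open scoped Topology InnerProductSpace

section OneVariable

variable {F G H : Type*} [NormedAddCommGroup F] [InnerProductSpace ℂ F]
  [NormedAddCommGroup G] [InnerProductSpace ℂ G] [NormedAddCommGroup H] [InnerProductSpace ℂ H]

lemma not_eventually_re_neg {p : ℂ → ℂ} {c : ℂ} (hp : ∀ᶠ t in 𝓝 c, DifferentiableAt ℂ p t)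
    (hpc : p c = 0) : ¬ ∀ᶠ t in 𝓝[≠] c, (p t).re < 0 := by
  intro hneg
  have hmax : IsLocalMax (norm ∘ fun t ↦ exp (p t)) c := by
    filter_upwards [eventually_nhdsWithin_iff.1 hneg] with t ht
    rcases eq_or_ne t c with rfl | htc
    · exact le_rfl
    · simpa [norm_exp, hpc] using (ht htc).le
  have hconst := eventually_eq_of_isLocalMax_norm (hp.mono fun t ht ↦ ht.cexp) hmax
  obtain ⟨t, ht, htneg⟩ := ((hconst.filter_mono nhdsWithin_le_nhds).and hneg).exists
  have : Real.exp (p t).re = 1 := by simpa [norm_exp, hpc] using congrArg norm ht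
  exact htneg.ne (Real.exp_eq_one_iff _ |>.1 this)

lemma norm_sq_eq_add_re_inner (u v : F) :
    ‖v‖ ^ 2 = ‖u‖ ^ 2 + 2 * (⟪u, v - u⟫_ℂ).re + ‖v - u‖ ^ 2 := by
  simpa only [add_sub_cancel] using! norm_add_sq (𝕜 := ℂ) u (v - u)

lemma isLittleO_norm_pow_four_sub {h : ℂ → F} (hd : DifferentiableAt ℂ h 0)
    (hcrit : h 0 = 0 ∨ deriv h 0 = 0) :
    (fun t ↦ ‖h t‖ ^ 4 - ‖h 0‖ ^ 4 - 4 * ‖h 0‖ ^ 2 * (⟪h 0, h t - h 0⟫_ℂ).re)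
      =o[𝓝 0] fun t : ℂ ↦ ‖t‖ ^ 2 := by
  rcases hcrit with h0 | h0
  · have hO : (fun t ↦ h t) =O[𝓝 0] fun t : ℂ ↦ ‖t‖ := by
      simpa [h0] using hd.hasFDerivAt.isBigO_sub.norm_right
    have hlt : (fun t : ℂ ↦ ‖t‖ ^ 4) =o[𝓝 0] fun t : ℂ ↦ ‖t‖ ^ 2 := by
      simpa using (isLittleO_norm_pow_norm_pow (E' := ℂ) (m := 2) (n := 4) (by norm_num))
    simpa [h0] using (hO.norm_left.pow 4).trans_isLittleO hlt
  · have hsub : (fun t ↦ ‖h t - h 0‖) =o[𝓝 0] fun t : ℂ ↦ ‖t‖ := by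
      simpa [h0] using (hasDerivAt_iff_isLittleO.1 hd.hasDerivAt).norm_norm
    have hsq : (fun t ↦ ‖h t - h 0‖ ^ 2) =o[𝓝 0] fun t : ℂ ↦ ‖t‖ ^ 2 := hsub.pow two_pos
    have hincr : (fun t ↦ ‖h t‖ ^ 2 - ‖h 0‖ ^ 2) =o[𝓝 0] fun t : ℂ ↦ ‖t‖ := by
      have hdiff : (fun t ↦ ‖h t‖ - ‖h 0‖) =o[𝓝 0] fun t : ℂ ↦ ‖t‖ :=
        (IsBigO.of_bound 1 <| .of_forall fun t ↦ by
          simpa using abs_norm_sub_norm_le (h t) (h 0)).trans_isLittleO hsub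
      have hsum : (fun t ↦ ‖h t‖ + ‖h 0‖) =O[𝓝 0] fun _ : ℂ ↦ (1 : ℝ) :=
        (hd.continuousAt.norm.add continuousAt_const).tendsto.isBigO_one ℝ
      exact (hdiff.mul_isBigO hsum).congr (fun t ↦ by ring) fun t ↦ mul_one _
    refine ((hsq.const_mul_left (2 * ‖h 0‖ ^ 2)).add (hincr.pow two_pos)).congr_left fun t ↦ ?_
    linear_combination (-2 * ‖h 0‖ ^ 2) * norm_sq_eq_add_re_inner (h 0) (h t)

lemma not_isLocalMax_norm_sq_sub_norm_pow_four {a v : F} (hv : v ≠ 0) {g : ℂ → G} {h : ℂ → H}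
    (hg : ∀ᶠ t in 𝓝 0, DifferentiableAt ℂ g t) (hh : ∀ᶠ t in 𝓝 0, DifferentiableAt ℂ h t)
    (hcrit : h 0 = 0 ∨ deriv h 0 = 0) {ε : ℝ} (hε : 0 < ε) (Λ : ℝ) :
    ¬ IsLocalMax (fun t : ℂ ↦ ε * ‖a + t • v‖ ^ 2 + ‖g t‖ ^ 2 - Λ * ‖h t‖ ^ 4) 0 := by
  intro hmax
  let p : ℂ → ℂ := fun t ↦ ε * (2 * ⟪a, t • v⟫_ℂ) + 2 * ⟪g 0, g t - g 0⟫_ℂ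
    - Λ * (4 * (‖h 0‖ ^ 2 : ℝ) * ⟪h 0, h t - h 0⟫_ℂ)
  have hp : ∀ᶠ t in 𝓝 0, DifferentiableAt ℂ p t := by
    filter_upwards [hg, hh] with t hgt hht
    have hgi : DifferentiableAt ℂ (fun t ↦ ⟪g 0, g t - g 0⟫_ℂ) t :=
      (innerSL ℂ (g 0)).differentiableAt.comp t (hgt.sub_const _)
    have hhi : DifferentiableAt ℂ (fun t ↦ ⟪h 0, h t - h 0⟫_ℂ) t :=
      (innerSL ℂ (h 0)).differentiableAt.comp t (hht.sub_const _)
    simp only [p, inner_smul_right]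
    fun_prop
  have hrem : ∀ᶠ t in 𝓝 (0 : ℂ),
      Λ * (‖h t‖ ^ 4 - ‖h 0‖ ^ 4 - 4 * ‖h 0‖ ^ 2 * (⟪h 0, h t - h 0⟫_ℂ).re)
        ≤ ε * ‖v‖ ^ 2 / 2 * ‖t‖ ^ 2 := by
    have := ((isLittleO_norm_pow_four_sub hh.self_of_nhds hcrit).const_mul_left Λ).bound
      (show 0 < ε * ‖v‖ ^ 2 / 2 by positivity)
    filter_upwards [this] with t ht
    simpa using (le_abs_self _).trans ht
  refine not_eventually_re_neg hp (by simp [p]) ?_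
  filter_upwards [nhdsWithin_le_nhds hmax, nhdsWithin_le_nhds hrem, self_mem_nhdsWithin]
    with t hmax hrem ht
  have hpre : (p t).re = ε * (2 * (⟪a, t • v⟫_ℂ).re) + 2 * (⟪g 0, g t - g 0⟫_ℂ).re
      - Λ * (4 * ‖h 0‖ ^ 2 * (⟪h 0, h t - h 0⟫_ℂ).re) := by
    simp [p, -ofReal_pow, mul_assoc]
  have hnorm := norm_sq_eq_add_re_inner a (a + t • v)
  rw [add_sub_cancel_left, norm_smul, mul_pow] at hnorm
  have hgnorm := norm_sq_eq_add_re_inner (g 0) (g t)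
  have htv : 0 < ε * ‖v‖ ^ 2 * ‖t‖ ^ 2 := by
    have := norm_pos_iff.2 (show t ≠ 0 from ht)
    positivity
  have := sq_nonneg ‖g t - g 0‖
  simp only [zero_smul, add_zero, hnorm] at hmax
  linarith

end OneVariable

section Penalty

lemma eventually_add_mul_lt_inv_mul {K : Type*} [TopologicalSpace K] [CompactSpace K]
    {a b c : K → ℝ} (ha : Continuous a) (hb : Continuous b) (hc : Continuous c)
    (hb_nonneg : ∀ k, 0 ≤ b k) (hab : ∀ k, b k = 0 → a k < 0) :
    ∀ᶠ ε in 𝓝[>] (0 : ℝ), ∀ k, a k + ε * c k < ε⁻¹ * b k := by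
  have hmem := isCompact_univ (X := K).mem_prod_nhdsSet_of_forall (l := 𝓝[>] (0 : ℝ))
    (s := {q | a q.2 + q.1 * c q.2 < q.1⁻¹ * b q.2}) fun k _ ↦ ?_
  · rwa [nhdsSet_univ, mem_prod_top] at hmem
  have hlim : Tendsto (fun q : ℝ × K ↦ a q.2 + q.1 * c q.2) (𝓝[>] 0 ×ˢ 𝓝 k) (𝓝 (a k)) := by
    have hcont : Continuous fun q : ℝ × K ↦ a q.2 + q.1 * c q.2 := by fun_prop
    have h := hcont.tendsto (0, k)
    rw [zero_mul, add_zero, nhds_prod_eq] at h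
    exact h.mono_left (prod_mono_left _ nhdsWithin_le_nhds)
  rcases (hb_nonneg k).eq_or_lt' with hbk | hbk
  · filter_upwards [hlim.eventually_lt_const (hab k hbk),
      tendsto_fst.eventually self_mem_nhdsWithin] with q hq (hpos : 0 < q.1)
    exact hq.trans_le (mul_nonneg (inv_nonneg.2 hpos.le) (hb_nonneg _))
  · have hinv := (tendsto_inv_nhdsGT_zero.comp tendsto_fst).atTop_mul_pos hbk
      (((hb.tendsto k).comp tendsto_snd : Tendsto (fun q : ℝ × K ↦ b q.2) (𝓝[>] 0 ×ˢ 𝓝 k) _))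
    filter_upwards [hlim.eventually_lt_const (lt_add_one _), hinv.eventually_gt_atTop (a k + 1)]
      with q hq hq'
    exact hq.trans hq'

lemma not_injective_iff_exists_norm_eq_one {𝕜 X F : Type*} [RCLike 𝕜] [NormedAddCommGroup X]
    [NormedSpace 𝕜 X] [AddCommGroup F] [Module 𝕜 F] {L : X →ₗ[𝕜] F} :
    ¬ Function.Injective L ↔ ∃ x, ‖x‖ = 1 ∧ L x = 0 := by
  rw [injective_iff_map_eq_zero]
  push Not
  constructor
  · rintro ⟨x, hLx, hx⟩
    exact ⟨(‖x‖ : 𝕜)⁻¹ • x, norm_smul_inv_norm hx, by simp [hLx]⟩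
  · rintro ⟨x, hx, hLx⟩
    exact ⟨x, hLx, norm_pos_iff.1 (hx ▸ one_pos)⟩

variable {E X F G H : Type*} [NormedAddCommGroup E] [NormedSpace ℂ E] [NormedAddCommGroup X]
  [NormedSpace ℂ X] [NormedAddCommGroup F] [NormedSpace ℂ F] [NormedAddCommGroup G]
  [NormedAddCommGroup H] [NormedSpace ℂ H]

/-- The function maximised in `exists_mem_frontier_norm_le`: the squared norm of `g`, made strictly
plurisubharmonic by `ε ‖e z‖²` and penalised where `x` is not in the kernel of `A z`. The penalty is
quartic so that it does not contribute to the Levi form at zeros of `A z x`. -/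
noncomputable def penalizedNormSq (e : E →L[ℂ] H) (g : E → G) (A : E → X →L[ℂ] F) (ε : ℝ)
    (z : E) (x : X) : ℝ :=
  ε * ‖e z‖ ^ 2 + ‖g z‖ ^ 2 - ε⁻¹ * ‖A z x‖ ^ 4

lemma penalizedNormSq_le_normalize {e : E →L[ℂ] H} {g : E → G} {A : E → X →L[ℂ] F} {ε : ℝ}
    (hε : 0 < ε) (z : E) {x : X} (hx : 1 ≤ ‖x‖) :
    penalizedNormSq e g A ε z x ≤ penalizedNormSq e g A ε z ((‖x‖ : ℂ)⁻¹ • x) := by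
  have hle : ‖A z ((‖x‖ : ℂ)⁻¹ • x)‖ ≤ ‖A z x‖ := by
    rw [map_smul, norm_smul, norm_inv, norm_real, norm_norm]
    exact mul_le_of_le_one_left (norm_nonneg _) (inv_le_one_of_one_le₀ hx)
  unfold penalizedNormSq
  gcongr

lemma penalizedNormSq_lt_of_map_eq_zero {e : E →L[ℂ] H} {g : E → G} {A : E → X →L[ℂ] F} {ε : ℝ}
    (hε : 0 < ε) {z : E} {x ξ : X} (hx : A z x ≠ 0) (hξ : A z ξ = 0) :
    penalizedNormSq e g A ε z x < penalizedNormSq e g A ε z ξ := by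
  have hpenalty : 0 < ε⁻¹ * ‖A z x‖ ^ 4 := by positivity
  simp only [penalizedNormSq, hξ, norm_zero]
  linarith

lemma continuousOn_penalizedNormSq (e : E →L[ℂ] H) {g : E → G} {A : E → X →L[ℂ] F} (ε : ℝ)
    {s : Set E} (hg : ContinuousOn g s) (hA : ContinuousOn A s) (t : Set X) :
    ContinuousOn (fun q : E × X ↦ penalizedNormSq e g A ε q.1 q.2) (s ×ˢ t) := by
  have hg' : ContinuousOn (fun q : E × X ↦ g q.1) (s ×ˢ t) :=
    hg.comp continuousOn_fst fun q hq ↦ hq.1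
  have hA' : ContinuousOn (fun q : E × X ↦ A q.1 q.2) (s ×ˢ t) :=
    (hA.comp continuousOn_fst fun q hq ↦ hq.1).clm_apply continuousOn_snd
  exact ((continuousOn_const.mul ((e.continuous.comp continuous_fst).norm.pow 2).continuousOn).add
    (hg'.norm.pow 2)).sub (continuousOn_const.mul (hA'.norm.pow 4))

lemma exists_forall_penalizedNormSq_lt [FiniteDimensional ℂ X] (e : E →L[ℂ] H) {g : E → G}
    {A : E → X →L[ℂ] F} {S : Set E} (hS : IsCompact S) (hg : ContinuousOn g S)
    (hA : ContinuousOn A S) {z₀ : E}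
    (hlt : ∀ z ∈ S, ¬ Function.Injective (A z) → ‖g z‖ < ‖g z₀‖) :
    ∃ ε > 0, ∀ z ∈ S, ∀ x, ‖x‖ = 1 → ∀ x₀, A z₀ x₀ = 0 →
      penalizedNormSq e g A ε z x < penalizedNormSq e g A ε z₀ x₀ := by
  let K := S ×ˢ sphere (0 : X) 1
  have : CompactSpace K := isCompact_iff_compactSpace.1 (hS.prod (isCompact_sphere 0 1))
  have hgK : Continuous fun q : K ↦ g q.1.1 :=
    hg.comp_continuous (by fun_prop) fun q ↦ q.2.1
  have hAK : Continuous fun q : K ↦ A q.1.1 q.1.2 :=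
    (hA.comp_continuous (by fun_prop) fun q ↦ q.2.1).clm_apply (by fun_prop)
  have hev := eventually_add_mul_lt_inv_mul (K := K) (a := fun q ↦ ‖g q.1.1‖ ^ 2 - ‖g z₀‖ ^ 2)
    (b := fun q ↦ ‖A q.1.1 q.1.2‖ ^ 4) (c := fun q ↦ ‖e q.1.1‖ ^ 2 - ‖e z₀‖ ^ 2)
    ((hgK.norm.pow 2).sub continuous_const) (hAK.norm.pow 4) (by fun_prop)
    (fun q ↦ by positivity) fun q hq ↦ ?_
  · obtain ⟨ε, hε, hpos⟩ := (hev.and self_mem_nhdsWithin).exists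
    refine ⟨ε, hpos, fun z hz x hx x₀ hx₀ ↦ ?_⟩
    have := hε ⟨(z, x), hz, by simpa using hx⟩
    simp only [penalizedNormSq, hx₀, norm_zero]
    linarith
  · have hsing : ¬ Function.Injective (A q.1.1) :=
      not_injective_iff_exists_norm_eq_one.2 ⟨q.1.2, by simpa using q.2.2, by simpa using hq⟩
    have := hlt _ q.2.1 hsing
    rw [sub_neg]
    gcongr

end Penalty

section MaximumPrinciple

lemma hasDerivAt_clm_apply_line {𝕜 E X F : Type*} [NontriviallyNormedField 𝕜]
    [NormedAddCommGroup E] [NormedSpace 𝕜 E] [NormedAddCommGroup X] [NormedSpace 𝕜 X]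
    [NormedAddCommGroup F] [NormedSpace 𝕜 F] {A : E → X →L[𝕜] F} {z : E}
    (hA : DifferentiableAt 𝕜 A z) (v : E) (x ξ : X) :
    HasDerivAt (fun t : 𝕜 ↦ A (z + t • v) (x + t • ξ)) (fderiv 𝕜 A z v x + A z ξ) 0 := by
  have hline : HasDerivAt (fun t : 𝕜 ↦ x + t • ξ) ξ 0 := by
    simpa using ((hasDerivAt_id (0 : 𝕜)).smul_const ξ).const_add x
  simpa using (hA.hasFDerivAt.hasLineDerivAt v : HasDerivAt _ _ _).clm_apply hline

lemma exists_ne_zero_inner_eq_zero_add_eq_zero {𝕜 E X F : Type*} [RCLike 𝕜]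
    [AddCommGroup E] [Module 𝕜 E] [FiniteDimensional 𝕜 E]
    [NormedAddCommGroup X] [InnerProductSpace 𝕜 X] [FiniteDimensional 𝕜 X]
    [AddCommGroup F] [Module 𝕜 F] [FiniteDimensional 𝕜 F]
    (hdim : finrank 𝕜 F + 1 < finrank 𝕜 E + finrank 𝕜 X)
    (D : E →ₗ[𝕜] F) {L : X →ₗ[𝕜] F} (hL : Function.Injective L) (x : X) :
    ∃ (v : E) (ξ : X), v ≠ 0 ∧ ⟪x, ξ⟫_𝕜 = 0 ∧ D v + L ξ = 0 := by
  let T : E × X →ₗ[𝕜] F × 𝕜 := (D.coprod L).prod (innerₛₗ 𝕜 x ∘ₗ LinearMap.snd 𝕜 E X)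
  obtain ⟨⟨v, ξ⟩, hker, hne⟩ := (Submodule.ne_bot_iff _).1
    (T.ker_ne_bot_of_finrank_lt (by simpa using hdim))
  obtain ⟨hDL, hx⟩ : D v + L ξ = 0 ∧ ⟪x, ξ⟫_𝕜 = 0 := by simpa [T] using hker
  refine ⟨v, ξ, ?_, hx, hDL⟩
  rintro rfl
  have hξ : ξ = 0 := hL (by simpa using hDL)
  exact hne (by rw [hξ, Prod.mk_zero_zero])

variable {E X F G H : Type*} [NormedAddCommGroup E] [NormedSpace ℂ E]
  [NormedAddCommGroup X] [InnerProductSpace ℂ X] [NormedAddCommGroup F] [InnerProductSpace ℂ F]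
  [NormedAddCommGroup G] [InnerProductSpace ℂ G] [NormedAddCommGroup H] [InnerProductSpace ℂ H]

lemma exists_penalizedNormSq_lt [Nontrivial E] [FiniteDimensional ℂ E] [FiniteDimensional ℂ X]
    [FiniteDimensional ℂ F] (hdim : finrank ℂ F + 1 < finrank ℂ E + finrank ℂ X)
    {e : E →L[ℂ] H} (he : Function.Injective e) {g : E → G} {A : E → X →L[ℂ] F} {O : Set E}
    (hO : IsOpen O) (hg : DifferentiableOn ℂ g O) (hA : DifferentiableOn ℂ A O) {ε : ℝ}
    (hε : 0 < ε) {z : E} (hz : z ∈ O) {x : X} (hx : ‖x‖ = 1) :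
    ∃ z' ∈ O, ∃ x', 1 ≤ ‖x'‖ ∧ penalizedNormSq e g A ε z x < penalizedNormSq e g A ε z' x' := by
  by_contra! hmax
  obtain ⟨v, ξ, hv, hxξ, hcrit⟩ : ∃ (v : E) (ξ : X), v ≠ 0 ∧ ⟪x, ξ⟫_ℂ = 0 ∧
      (A z x = 0 ∨ fderiv ℂ A z v x + A z ξ = 0) := by
    by_cases hAx : A z x = 0
    · exact (exists_ne (0 : E)).imp fun v hv ↦ ⟨0, hv, by simp, .inl hAx⟩
    have hinj : Function.Injective (A z) := by
      by_contra hker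
      obtain ⟨ξ, hξ, hAξ⟩ : ∃ ξ, ‖ξ‖ = 1 ∧ A z ξ = 0 :=
        not_injective_iff_exists_norm_eq_one.1 hker
      exact (hmax z hz ξ hξ.ge).not_gt (penalizedNormSq_lt_of_map_eq_zero hε hAx hAξ)
    obtain ⟨v, ξ, hv, hxξ, hvξ⟩ := exists_ne_zero_inner_eq_zero_add_eq_zero hdim
      (ContinuousLinearMap.apply ℂ F x ∘L fderiv ℂ A z).toLinearMap (L := A z) hinj x
    exact ⟨v, ξ, hv, hxξ, .inr hvξ⟩
  have hline : ∀ᶠ t : ℂ in 𝓝 0, z + t • v ∈ O :=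
    (show Continuous fun t : ℂ ↦ z + t • v by fun_prop).continuousAt.eventually_mem
      (by simpa using hO.mem_nhds hz)
  have hAline : ∀ᶠ t : ℂ in 𝓝 0,
      DifferentiableAt ℂ (fun t : ℂ ↦ A (z + t • v) (x + t • ξ)) t := by
    filter_upwards [hline] with t ht
    have : DifferentiableAt ℂ (fun t : ℂ ↦ A (z + t • v)) t :=
      (hA.differentiableAt (hO.mem_nhds ht)).comp t (by fun_prop)
    exact this.clm_apply (by fun_prop)
  have hgline : ∀ᶠ t : ℂ in 𝓝 0, DifferentiableAt ℂ (fun t : ℂ ↦ g (z + t • v)) t := by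
    filter_upwards [hline] with t ht
    exact (hg.differentiableAt (hO.mem_nhds ht)).comp t (by fun_prop)
  have hnorm (t : ℂ) : 1 ≤ ‖x + t • ξ‖ := by
    have := norm_sq_eq_add_re_inner x (x + t • ξ)
    rw [add_sub_cancel_left, inner_smul_right, hxξ, hx, mul_zero, zero_re] at this
    nlinarith [norm_nonneg (x + t • ξ)]
  refine not_isLocalMax_norm_sq_sub_norm_pow_four (a := e z) (v := e v)
    ((map_ne_zero_iff e he).2 hv) hgline hAline ?_ hε ε⁻¹ ?_
  · refine hcrit.imp (by simp) fun hderiv ↦ ?_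
    have hAz := hA.differentiableAt (hO.mem_nhds hz)
    simpa [hderiv] using (hasDerivAt_clm_apply_line hAz v x ξ).deriv
  · filter_upwards [hline] with t ht
    simpa [penalizedNormSq] using hmax _ ht (x + t • ξ) (hnorm t)

theorem exists_mem_frontier_norm_le [Nontrivial E] [FiniteDimensional ℂ E] [FiniteDimensional ℂ X]
    [FiniteDimensional ℂ F] (hdim : finrank ℂ F + 1 < finrank ℂ E + finrank ℂ X)
    {g : E → G} {A : E → X →L[ℂ] F} {O : Set E} (hO : IsOpen O) (hbdd : Bornology.IsBounded O)
    (hg : DiffContOnCl ℂ g O) (hA : DiffContOnCl ℂ A O) {z₀ : E} (hz₀ : z₀ ∈ closure O)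
    (hker : ¬ Function.Injective (A z₀)) :
    ∃ z ∈ frontier O, ¬ Function.Injective (A z) ∧ ‖g z₀‖ ≤ ‖g z‖ := by
  by_contra! hlt
  obtain ⟨x₀, hx₀, hAx₀⟩ : ∃ x₀, ‖x₀‖ = 1 ∧ A z₀ x₀ = 0 :=
    not_injective_iff_exists_norm_eq_one.1 hker
  have : ProperSpace E := FiniteDimensional.proper ℂ E
  have hcpt : IsCompact (closure O) := hbdd.isCompact_closure
  obtain ⟨e, he⟩ : ∃ e : E →L[ℂ] EuclideanSpace ℂ (Fin (finrank ℂ E)), Function.Injective e :=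
    ⟨(ContinuousLinearEquiv.ofFinrankEq finrank_euclideanSpace_fin.symm).toContinuousLinearMap,
      ContinuousLinearEquiv.injective _⟩
  obtain ⟨ε, hε, hfrontier⟩ := exists_forall_penalizedNormSq_lt e
    (hcpt.of_isClosed_subset isClosed_frontier frontier_subset_closure)
    (hg.continuousOn.mono frontier_subset_closure) (hA.continuousOn.mono frontier_subset_closure)
    hlt
  obtain ⟨⟨z, x⟩, ⟨hz, hx⟩, hmax⟩ := (hcpt.prod (isCompact_sphere (0 : X) 1)).exists_isMaxOn
    ⟨(z₀, x₀), hz₀, mem_sphere_zero_iff_norm.2 hx₀⟩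
    (continuousOn_penalizedNormSq e ε hg.continuousOn hA.continuousOn _)
  rw [mem_sphere_zero_iff_norm] at hx
  replace hmax (z') (hz' : z' ∈ closure O) (x') (hx' : ‖x'‖ = 1) :
      penalizedNormSq e g A ε z' x' ≤ penalizedNormSq e g A ε z x :=
    hmax (a := (z', x')) ⟨hz', mem_sphere_zero_iff_norm.2 hx'⟩
  have hzO : z ∈ O := by
    by_contra hzO
    have hzf : z ∈ frontier O := ⟨hz, by rwa [hO.interior_eq]⟩
    exact (hfrontier z hzf x hx x₀ hAx₀).not_ge (hmax z₀ hz₀ x₀ hx₀)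
  obtain ⟨z', hz', x', hx', hgt⟩ := exists_penalizedNormSq_lt hdim he hO
    hg.differentiableOn hA.differentiableOn hε hzO hx
  have hx'_ne : x' ≠ 0 := norm_pos_iff.1 (one_pos.trans_le hx')
  exact (hgt.trans_le (penalizedNormSq_le_normalize hε z' hx')).not_ge
    (hmax z' (subset_closure hz') _ (norm_smul_inv_norm hx'_ne))

end MaximumPrinciple

section OpenMapping

lemma isCompact_sep_not_injective {𝕜 Z X F : Type*} [NontriviallyNormedField 𝕜] [CompleteSpace 𝕜]
    [TopologicalSpace Z] [NormedAddCommGroup X] [NormedSpace 𝕜 X] [FiniteDimensional 𝕜 X]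
    [NormedAddCommGroup F] [NormedSpace 𝕜 F] {A : Z → X →L[𝕜] F} {K : Set Z} (hK : IsCompact K)
    (hA : ContinuousOn A K) : IsCompact {z ∈ K | ¬ Function.Injective (A z)} := by
  obtain ⟨V, hV, hKV⟩ := continuousOn_iff_isClosed.1 hA {L | ¬ Function.Injective L}
    ContinuousLinearMap.isOpen_injective.isClosed_compl
  have : {z ∈ K | ¬ Function.Injective (A z)} = K ∩ V := by
    rw [inter_comm, ← hKV, inter_comm]; rfl
  exact this ▸ hK.inter_right hV

lemma exists_injective_prod_ker {𝕜 E W : Type*} [NontriviallyNormedField 𝕜]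
    [NormedAddCommGroup E] [NormedSpace 𝕜 E] [NormedAddCommGroup W] [NormedSpace 𝕜 W]
    (π : E →L[𝕜] W) {a : E} (ha : π a ≠ 0) :
    ∃ L : 𝕜 × π.ker →L[𝕜] E, Function.Injective L ∧ ∀ q, π (L q) = q.1 • π a := by
  let L : 𝕜 × π.ker →L[𝕜] E := (ContinuousLinearMap.toSpanSingleton 𝕜 a).coprod π.ker.subtypeL
  have hπL (q) : π (L q) = q.1 • π a := by simp [L]
  refine ⟨L, (injective_iff_map_eq_zero L).2 fun q hq ↦ ?_, hπL⟩
  have hq1 : q.1 = 0 := by simpa [hq, ha] using (hπL q).symm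
  exact Prod.ext hq1 (by simpa [L, hq1] using hq)

variable {D E X F W : Type*} [NormedAddCommGroup E] [NormedSpace ℂ E]
  [NormedAddCommGroup X] [InnerProductSpace ℂ X] [FiniteDimensional ℂ X]
  [NormedAddCommGroup F] [InnerProductSpace ℂ F] [FiniteDimensional ℂ F]
  [NormedAddCommGroup W] [NormedSpace ℂ W]

lemma exists_not_injective_of_injective_line [NormedAddCommGroup D] [NormedSpace ℂ D]
    [FiniteDimensional ℂ D] [Nontrivial D] (hdim : finrank ℂ F + 1 < finrank ℂ D + finrank ℂ X)
    {L : D →L[ℂ] E} (hL : Function.Injective L) (τ : D →L[ℂ] ℂ) {A : E → X →L[ℂ] F} {z₀ : E}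
    {ρ ε : ℝ} (hρ : 0 < ρ) (hA : DifferentiableOn ℂ A (closedBall z₀ ρ))
    (hz₀ : ¬ Function.Injective (A z₀)) (hε : 0 < ε) (hε1 : ε < 1) :
    ∃ q, ¬ Function.Injective (A (z₀ + L q)) ∧
      (‖L q‖ = ρ ∧ ‖τ q - 1‖ ≤ 1 ∨ ‖L q‖ < ρ ∧ ‖τ q - 1‖ = ε) := by
  obtain ⟨C, -, hC⟩ := L.injective_iff_antilipschitz.1 hL
  let O : Set D := L ⁻¹' ball 0 ρ ∩ {q | ε < ‖τ q - 1‖}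
  have hO : IsOpen O := (isOpen_ball.preimage L.continuous).inter
    (isOpen_lt (by fun_prop) (by fun_prop))
  have hOcl : closure O ⊆ L ⁻¹' closedBall 0 ρ ∩ {q | ε ≤ ‖τ q - 1‖} :=
    closure_minimal (inter_subset_inter (preimage_mono ball_subset_closedBall)
      (ofPred_subset_ofPred.2 fun q hq ↦ hq.le))
      ((isClosed_closedBall.preimage L.continuous).inter (isClosed_le (by fun_prop) (by fun_prop)))
  have hball : MapsTo (fun q ↦ z₀ + L q) (closure O) (closedBall z₀ ρ) := fun q hq ↦ by
    simpa using (hOcl hq).1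
  have hg : DiffContOnCl ℂ (fun q ↦ (τ q - 1)⁻¹) O :=
    DiffContOnCl.inv (Differentiable.diffContOnCl (by fun_prop)) fun q hq ↦
      norm_pos_iff.1 (hε.trans_le (hOcl hq).2)
  obtain ⟨q, hqO, hqA, hqg⟩ := exists_mem_frontier_norm_le (z₀ := 0) hdim hO
    ((hC.isBounded_preimage isBounded_ball).subset inter_subset_left) hg
    (hA.comp (by fun_prop) hball).diffContOnCl (subset_closure (by simp [O, hρ, hε1]))
    (by simpa using hz₀)
  obtain ⟨hqρ, hqε⟩ := hOcl (frontier_subset_closure hqO)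
  rw [mem_preimage, mem_closedBall_zero_iff] at hqρ
  refine ⟨q, hqA, hqρ.eq_or_lt.imp (fun hqρ ↦ ⟨hqρ, ?_⟩) fun hqρ ↦ ⟨hqρ, hqε.antisymm' ?_⟩⟩
  · have := hε.trans_le hqε
    simpa [one_le_inv_iff₀, this] using hqg
  · by_contra! h
    exact hqO.2 (hO.interior_eq.symm ▸ ⟨by simpa using hqρ, h⟩)

variable [FiniteDimensional ℂ E]

lemma map_add_mem_image_of_forall_sphere_ne {A : E → X →L[ℂ] F} {z₀ : E} {ρ : ℝ} (hρ : 0 < ρ)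
    (hA : DifferentiableOn ℂ A (closedBall z₀ ρ)) (hz₀ : ¬ Function.Injective (A z₀))
    {π : E →L[ℂ] W} (hdim : finrank ℂ F < finrank ℂ π.ker + finrank ℂ X) {a : E}
    (hsphere : ∀ z ∈ sphere z₀ ρ, ¬ Function.Injective (A z) →
      ∀ t ∈ closedBall (0 : ℂ) 2, π z ≠ π z₀ + t • π a) :
    π (z₀ + a) ∈ π '' {z ∈ closedBall z₀ ρ | ¬ Function.Injective (A z)} := by
  have : ProperSpace E := FiniteDimensional.proper ℂ E
  set S := {z ∈ closedBall z₀ ρ | ¬ Function.Injective (A z)}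
  have hz₀S : z₀ ∈ S := ⟨mem_closedBall_self hρ.le, hz₀⟩
  have hclosed : IsClosed {t : ℂ | π (z₀ + t • a) ∈ π '' S} :=
    ((isCompact_sep_not_injective (isCompact_closedBall z₀ ρ) hA.continuousOn).image
      π.continuous).isClosed.preimage (by fun_prop)
  by_contra hnot
  obtain ⟨ε, hε, hεS⟩ := nhds_basis_closedBall.mem_iff.1
    (hclosed.isOpen_compl.mem_nhds (show (1 : ℂ) ∈ _ by simpa using hnot))
  have hε1 : ε < 1 := by
    by_contra! h
    exact hεS (show (0 : ℂ) ∈ _ by simpa using h) (by simpa using mem_image_of_mem π hz₀S)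
  have ha : π a ≠ 0 := fun h ↦ hnot ⟨z₀, hz₀S, by simp [h]⟩
  obtain ⟨L, hL, hπL⟩ := exists_injective_prod_ker π ha
  have hdim' : finrank ℂ F + 1 < finrank ℂ (ℂ × π.ker) + finrank ℂ X := by
    rw [finrank_prod, finrank_self]
    omega
  obtain ⟨q, hqA, ⟨hqρ, hq1⟩ | ⟨hqρ, hqε⟩⟩ := exists_not_injective_of_injective_line hdim' hL
    (.fst ℂ ℂ π.ker) hρ hA hz₀ hε hε1
  · refine hsphere (z₀ + L q) (by simpa using hqρ) hqA q.1 ?_ (by simp [hπL])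
    have : ‖q.1 - 1‖ ≤ 1 := hq1
    rw [mem_closedBall_zero_iff]
    linarith [norm_sub_norm_le q.1 1, norm_one (α := ℂ)]
  · refine hεS (a := q.1) (mem_closedBall_iff_norm.2 hqε.le) ⟨z₀ + L q, ⟨?_, hqA⟩, by simp [hπL]⟩
    simpa using hqρ.le

theorem image_sep_not_injective_mem_nhds {A : E → X →L[ℂ] F} {z₀ : E} {U : Set E} (hU : U ∈ 𝓝 z₀)
    (hA : DifferentiableOn ℂ A U) (hz₀ : ¬ Function.Injective (A z₀)) {π : E →L[ℂ] W}
    (hπ : Function.Surjective π) (hdim : finrank ℂ F < finrank ℂ π.ker + finrank ℂ X)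
    (hisol : ∀ z ∈ U, ¬ Function.Injective (A z) → π z = π z₀ → z = z₀) :
    π '' {z ∈ U | ¬ Function.Injective (A z)} ∈ 𝓝 (π z₀) := by
  have : ProperSpace E := FiniteDimensional.proper ℂ E
  obtain ⟨ρ, hρ, hρU⟩ := nhds_basis_closedBall.mem_iff.1 hU
  have hC : IsCompact {z ∈ sphere z₀ ρ | ¬ Function.Injective (A z)} :=
    isCompact_sep_not_injective (isCompact_sphere z₀ ρ)
      (hA.continuousOn.mono (sphere_subset_closedBall.trans hρU))
  have hev : ∀ᶠ w : W in 𝓝 0, ∀ q ∈ {z ∈ sphere z₀ ρ | ¬ Function.Injective (A z)} ×ˢ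
      closedBall (0 : ℂ) 2, π q.1 ≠ π z₀ + q.2 • w := by
    refine (hC.prod (isCompact_closedBall 0 2)).eventually_forall_of_forall_eventually
      fun q hq ↦ ?_
    have hne : π q.1 ≠ π z₀ + q.2 • (0 : W) := by
      have hqU : q.1 ∈ U := hρU (sphere_subset_closedBall hq.1.1)
      simpa using fun h ↦ ne_of_mem_sphere hq.1.1 hρ.ne' (hisol _ hqU hq.1.2 h)
    have : IsOpen {p : W × (E × ℂ) | π p.2.1 ≠ π z₀ + p.2.2 • p.1} :=
      isOpen_ne_fun (by fun_prop) (by fun_prop)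
    exact this.mem_nhds hne
  rw [← map_add_left_nhds_zero, mem_map]
  filter_upwards [hev] with w hw
  obtain ⟨a, rfl⟩ := hπ w
  rw [mem_preimage, ← map_add]
  refine image_mono ?_ (map_add_mem_image_of_forall_sphere_ne hρ (hA.mono hρU) hz₀ hdim
    fun z hz hzA t ht ↦ hw (z, t) ⟨⟨hz, hzA⟩, ht⟩)
  exact fun z hz ↦ ⟨hρU hz.1, hz.2⟩

end OpenMapping

section GenericProjection

lemma exists_forall_snd_ne_fst_smul {W : Type*} [NormedAddCommGroup W] [NormedSpace ℂ W]
    [FiniteDimensional ℂ W] {S : Set (ℂ × W)} (hS : dimH S < 2 * finrank ℂ W) (h0 : 0 ∉ S) :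
    ∃ w, ∀ q ∈ S, q.2 ≠ q.1 • w := by
  have : FiniteDimensional ℝ W := .complexToReal W
  have : ProperSpace W := FiniteDimensional.proper ℂ W
  let S' := {q ∈ S | q.1 ≠ 0}
  have hslopes : dimH ((fun q : ℂ × W ↦ q.1⁻¹ • q.2) '' S') < finrank ℝ W := calc
    _ ≤ dimH S' := dimH_image_le_of_locally_lipschitzOn fun q hq ↦ by
      have : ContDiffAt ℂ 1 (fun q : ℂ × W ↦ q.1⁻¹ • q.2) q :=
        (contDiffAt_fst.inv hq.2).smul contDiffAt_snd
      obtain ⟨C, t, ht, hC⟩ := this.exists_lipschitzOnWith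
      exact ⟨C, t, mem_nhdsWithin_of_mem_nhds ht, hC⟩
    _ ≤ dimH S := dimH_mono fun q hq ↦ hq.1
    _ < finrank ℝ W := by rwa [finrank_real_of_complex, Nat.cast_mul, Nat.cast_two]
  obtain ⟨w, hw⟩ := (dense_compl_of_dimH_lt_finrank hslopes).nonempty
  refine ⟨w, fun q hq hqw ↦ ?_⟩
  by_cases hq1 : q.1 = 0
  · have : q = 0 := Prod.ext hq1 (by simp [hqw, hq1])
    exact h0 (this ▸ hq)
  · exact hw ⟨q, ⟨hq, hq1⟩, by simp [hqw, hq1]⟩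

theorem exists_surjective_forall_ne_zero {E : Type*} [NormedAddCommGroup E] [NormedSpace ℂ E]
    [FiniteDimensional ℂ E] {d : ℕ} (hd : d ≤ finrank ℂ E) {S : Set E} (hS : dimH S < 2 * d)
    (h0 : 0 ∉ S) :
    ∃ π : E →L[ℂ] (Fin d → ℂ), Function.Surjective π ∧ ∀ x ∈ S, π x ≠ 0 := by
  refine Nat.decreasingInduction'
    (P := fun s ↦ ∃ π : E →L[ℂ] (Fin s → ℂ), Function.Surjective π ∧ ∀ x ∈ S, π x ≠ 0)
    (fun s _ hds ⟨π, hπ, hπS⟩ ↦ ?_) hd ?_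
  · let φ : (Fin (s + 1) → ℂ) ≃L[ℂ] ℂ × (Fin s → ℂ) := .ofFinrankEq (by simp [add_comm])
    have hdimH : dimH ((φ ∘ π) '' S) < 2 * finrank ℂ (Fin s → ℂ) := calc
      _ ≤ dimH S := (φ.lipschitz.comp π.lipschitz).dimH_image_le S
      _ < 2 * d := hS
      _ ≤ 2 * finrank ℂ (Fin s → ℂ) := by rw [finrank_fin_fun]; gcongr
    obtain ⟨w, hw⟩ := exists_forall_snd_ne_fst_smul hdimH (by simpa using hπS)
    refine ⟨(.snd ℂ ℂ (Fin s → ℂ) - (ContinuousLinearMap.fst ℂ ℂ (Fin s → ℂ)).smulRight w) ∘L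
      (φ : _ →L[ℂ] _) ∘L π, fun y ↦ ?_, fun x hx ↦ ?_⟩
    · obtain ⟨x, hx⟩ := (φ.surjective.comp hπ) (0, y)
      rw [Function.comp_apply] at hx
      exact ⟨x, by simp [hx]⟩
    · simpa [sub_eq_zero] using hw _ (mem_image_of_mem _ hx)
  · let φ : E ≃L[ℂ] (Fin (finrank ℂ E) → ℂ) := .ofFinrankEq (by simp)
    exact ⟨φ, φ.surjective, fun x hx ↦ by simpa using ne_of_mem_of_not_mem hx h0⟩

end GenericProjection

section Transpose

variable {𝕜 X Y : Type*} [NontriviallyNormedField 𝕜] [CompleteSpace 𝕜]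
  [NormedAddCommGroup X] [NormedSpace 𝕜 X] [FiniteDimensional 𝕜 X]
  [NormedAddCommGroup Y] [NormedSpace 𝕜 Y] [FiniteDimensional 𝕜 Y]

lemma injective_strongDual_comp_iff_surjective {L : X →L[𝕜] Y} :
    Function.Injective (fun φ : StrongDual 𝕜 Y ↦ φ ∘L L) ↔ Function.Surjective L := by
  let eX : Dual 𝕜 X ≃ₗ[𝕜] StrongDual 𝕜 X := LinearMap.toContinuousLinearMap
  let eY : Dual 𝕜 Y ≃ₗ[𝕜] StrongDual 𝕜 Y := LinearMap.toContinuousLinearMap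
  have hdual : (fun φ : StrongDual 𝕜 Y ↦ φ ∘L L) ∘ eY = eX ∘ (L : X →ₗ[𝕜] Y).dualMap := rfl
  rw [← Function.Injective.of_comp_iff' _ eY.bijective, hdual, eX.injective.of_comp_iff,
    LinearMap.dualMap_injective_iff]
  rfl

lemma finrank_strongDual : finrank 𝕜 (StrongDual 𝕜 X) = finrank 𝕜 X :=
  (LinearMap.toContinuousLinearMap (𝕜 := 𝕜) (E := X) (F' := 𝕜)).finrank_eq.symm.trans
    Subspace.dual_finrank_eq

lemma exists_forall_injective_iff_surjective {𝕜 X Y : Type*} [RCLike 𝕜]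
    [NormedAddCommGroup X] [NormedSpace 𝕜 X] [FiniteDimensional 𝕜 X]
    [NormedAddCommGroup Y] [NormedSpace 𝕜 Y] [FiniteDimensional 𝕜 Y] : ∃ T : (X →L[𝕜] Y) →L[𝕜]
      EuclideanSpace 𝕜 (Fin (finrank 𝕜 Y)) →L[𝕜] EuclideanSpace 𝕜 (Fin (finrank 𝕜 X)),
    ∀ L, Function.Injective (T L) ↔ Function.Surjective L := by
  let eX : StrongDual 𝕜 X ≃L[𝕜] EuclideanSpace 𝕜 (Fin (finrank 𝕜 X)) :=
    .ofFinrankEq (by rw [finrank_strongDual, finrank_euclideanSpace_fin])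
  let eY : EuclideanSpace 𝕜 (Fin (finrank 𝕜 Y)) ≃L[𝕜] StrongDual 𝕜 Y :=
    .ofFinrankEq (by rw [finrank_strongDual, finrank_euclideanSpace_fin])
  let T := eY.symm.arrowCongr eX
  refine ⟨T.toContinuousLinearMap ∘L (ContinuousLinearMap.compL 𝕜 X Y 𝕜).flip, fun L ↦ ?_⟩
  rw [← injective_strongDual_comp_iff_surjective]
  exact (eX.injective.of_comp_iff _).trans
    (Function.Injective.of_comp_iff' (fun φ : StrongDual 𝕜 Y ↦ φ ∘L L) eY.bijective)

end Transpose

section Degeneracy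

variable {E : Type*} [NormedAddCommGroup E] [NormedSpace ℂ E] [FiniteDimensional ℂ E]

theorem le_dimH_sep_not_injective {X F : Type*} [NormedAddCommGroup X] [InnerProductSpace ℂ X]
    [FiniteDimensional ℂ X] [NormedAddCommGroup F] [InnerProductSpace ℂ F] [FiniteDimensional ℂ F]
    {A : E → X →L[ℂ] F} {z₀ : E} {U : Set E} (hU : U ∈ 𝓝 z₀) (hA : DifferentiableOn ℂ A U)
    (hz₀ : ¬ Function.Injective (A z₀)) {d : ℕ} (hdE : d ≤ finrank ℂ E)
    (hd : finrank ℂ F + d < finrank ℂ E + finrank ℂ X) :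
    2 * d ≤ dimH {z ∈ U | ¬ Function.Injective (A z)} := by
  set Z := {z ∈ U | ¬ Function.Injective (A z)}
  by_contra! hlt
  have hpunct : dimH {x | x ≠ 0 ∧ z₀ + x ∈ Z} < 2 * d := by
    have hsub : {x | x ≠ 0 ∧ z₀ + x ∈ Z} ⊆ IsometryEquiv.subRight z₀ '' Z :=
      fun x hx ↦ ⟨z₀ + x, hx.2, add_sub_cancel_left z₀ x⟩
    calc
      _ ≤ dimH (IsometryEquiv.subRight z₀ '' Z) := dimH_mono hsub
      _ = dimH Z := (IsometryEquiv.subRight z₀).dimH_image Z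
      _ < 2 * d := hlt
  obtain ⟨π, hπ, hπZ⟩ := exists_surjective_forall_ne_zero hdE hpunct (by simp)
  have hker : finrank ℂ π.ker + d = finrank ℂ E := by
    have := π.toLinearMap.finrank_range_add_finrank_ker
    rw [LinearMap.range_eq_top.2 hπ, finrank_top, finrank_fin_fun] at this
    omega
  have hnhds := image_sep_not_injective_mem_nhds hU hA hz₀ hπ (by omega) fun z hzU hzA hπz ↦ by
    by_contra hne
    exact hπZ (z - z₀) ⟨sub_ne_zero.2 hne, by simpa [Z] using ⟨hzU, hzA⟩⟩ (by simp [hπz])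
  refine hlt.not_ge ?_
  calc (2 * d : ℝ≥0∞) = dimH (π '' Z) := by
        rw [Real.dimH_of_mem_nhds hnhds, finrank_real_of_complex, finrank_fin_fun]
        simp
    _ ≤ dimH Z := π.lipschitz.dimH_image_le Z

theorem codim_degeneracy_le_general {X Y : Type*} [NormedAddCommGroup X] [NormedSpace ℂ X]
    [FiniteDimensional ℂ X] [NormedAddCommGroup Y] [NormedSpace ℂ Y] [FiniteDimensional ℂ Y]
    {f : E → X →L[ℂ] Y} {z₀ : E} {U : Set E} (hU : U ∈ 𝓝 z₀)
    (hf : DifferentiableOn ℂ f U) (hz₀ : ¬ Function.Surjective (f z₀)) :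
    ((2 * (finrank ℂ E - (finrank ℂ X + 1 - finrank ℂ Y)) : ℕ) : ℝ≥0∞) ≤
      dimH {z ∈ U | ¬ Function.Surjective (f z)} := by
  obtain ⟨T, hT⟩ := exists_forall_injective_iff_surjective (𝕜 := ℂ) (X := X) (Y := Y)
  simp only [← hT] at hz₀ ⊢
  rw [Nat.cast_mul, Nat.cast_two]
  rcases Nat.eq_zero_or_pos (finrank ℂ E - (finrank ℂ X + 1 - finrank ℂ Y)) with hd | hd
  · simp [hd]
  · exact le_dimH_sep_not_injective hU (T.differentiable.comp_differentiableOn hf) hz₀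
      (Nat.sub_le _ _) (by simp only [finrank_euclideanSpace_fin]; omega)

lemma differentiableOn_toContinuousLinearMap_mulVecLin {𝕜 D m n : Type*}
    [NontriviallyNormedField 𝕜] [CompleteSpace 𝕜] [NormedAddCommGroup D] [NormedSpace 𝕜 D]
    [Finite m] [Fintype n] {f : m → n → D → 𝕜} {s : Set D}
    (hf : ∀ j i, DifferentiableOn 𝕜 (f j i) s) :
    DifferentiableOn 𝕜 (fun z ↦ LinearMap.toContinuousLinearMap
      (Matrix.mulVecLin (Matrix.of fun j i ↦ f j i z))) s := by
  cases nonempty_fintype m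
  let T : (m → n → 𝕜) →ₗ[𝕜] (n → 𝕜) →L[𝕜] (m → 𝕜) :=
    LinearMap.toContinuousLinearMap.toLinearMap ∘ₗ Matrix.mulVecBilin 𝕜 𝕜
  exact T.toContinuousLinearMap.differentiable.comp_differentiableOn
    (differentiableOn_pi.2 fun j ↦ differentiableOn_pi.2 (hf j))

end Degeneracy

/-- The degeneracy set `Z` of an `r × m` matrix (`1 ≤ r ≤ m`) of holomorphic functions
on an open set `U ⊆ ℂⁿ` — the set where the matrix is not surjective, equivalently the
common zero set of all `r × r` minors — has codimension at most `m − r + 1`: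
at every point `z₀ ∈ Z` and for every neighborhood `V` of `z₀`, the Hausdorff dimension
of `Z ∩ V` is at least `2(n − (m − r + 1))`. -/
theorem codim_degeneracy_le (n r m : ℕ) (hrm : r ≤ m) (hr : 1 ≤ r)
    (U : Set (Fin n → ℂ)) (hU : IsOpen U)
    (f : Fin r → Fin m → (Fin n → ℂ) → ℂ)
    (hf : ∀ j i, AnalyticOnNhd ℂ (f j i) U)
    (Z : Set (Fin n → ℂ))
    (hZ : Z = {z ∈ U | ¬ Function.Surjective (Matrix.mulVecLin (Matrix.of fun j i => f j i z))})
    (hZproper : Z ≠ U)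
    (z₀ : Fin n → ℂ) (hz₀ : z₀ ∈ Z) :
    ∀ V ∈ nhds z₀, ((2 * (n - (m - r + 1)) : ℕ) : ℝ≥0∞) ≤ dimH (Z ∩ V) := by
  intro V hV
  subst hZ
  have hdiff := differentiableOn_toContinuousLinearMap_mulVecLin fun j i ↦
    (hf j i).differentiableOn.mono (inter_subset_left : U ∩ V ⊆ U)
  have hle := codim_degeneracy_le_general (inter_mem (hU.mem_nhds hz₀.1) hV) hdiff hz₀.2
  rw [finrank_fin_fun, finrank_fin_fun, finrank_fin_fun, Nat.sub_add_comm hrm] at hle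
  exact hle.trans (dimH_mono fun z hz ↦ ⟨⟨hz.1.1, hz.2⟩, hz.1.2⟩)
end

section
/- With the complex above and σ_j ∈ E the dual sections with f_k(σ_j) = δ_{jk} (defined off Z), set σ = Σ_j σ_j ⊗ ε_j* and uₖ = σ₁∧⋯∧σ_r∧(∂̄σ)^{⊗(k−1)} ⊗ ε* (a (0,k−1)-form with values in Λ^{r+k−1}E⊗S^{k−1}Q*⊗det Q*). Then on X∖Z: δ_F u₁ = 1 and δ_f u_{k+1} = ∂̄uₖ for all k ≥ 1. -/
open Complex

noncomputable section

/-! A concrete coordinate model for forms with values in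
`Λ^{r+k-1}E ⊗ S^{k-1}Q* ⊗ det Q*` on an open subset of `ℂⁿ`.

Following the paper, `(0,q)`-forms with values in `Λ E` are regarded as sections of
`Λ (E ⊕ T*₀₁)`: we use the exterior algebra of `(Fin m → ℂ) × (Fin n → ℂ)`, the first
factor being the fiber of `E` and the second carrying the antiholomorphic differentials
`dζ̄_t`.  The symmetric factor `S^{k-1}Q*` is recorded in coordinates by monomial
multidegrees `α : Fin r → ℕ`. -/

/-- The model space `Λ (E ⊕ T*₀₁)` over `E = ℂᵐ`, with `n` antiholomorphic
differentials. -/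
abbrev EA (m n : ℕ) := ExteriorAlgebra ℂ ((Fin m → ℂ) × (Fin n → ℂ))

/-- The basis vector `e_i` of `E`. -/
def eVec (m n : ℕ) (i : Fin m) : (Fin m → ℂ) × (Fin n → ℂ) := (Pi.single i 1, 0)

/-- The antiholomorphic differential `dζ̄_t`. -/
def xiVec (m n : ℕ) (t : Fin n) : (Fin m → ℂ) × (Fin n → ℂ) := (0, Pi.single t 1)

/-- The covector on `E ⊕ T*₀₁` given by a tuple `g` on the `E` factor. -/
def dualE (m n : ℕ) (g : Fin m → ℂ) : Module.Dual ℂ ((Fin m → ℂ) × (Fin n → ℂ)) :=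
  ∑ i, g i • ((LinearMap.proj i).comp (LinearMap.fst ℂ (Fin m → ℂ) (Fin n → ℂ)))

/-- Interior multiplication `δ_g` by a covector `g ∈ E*`. -/
def contrE (m n : ℕ) (g : Fin m → ℂ) : EA m n →ₗ[ℂ] EA m n :=
  CliffordAlgebra.contractLeft
    (Q := (0 : QuadraticForm ℂ ((Fin m → ℂ) × (Fin n → ℂ)))) (dualE m n g)

/-- The `t`-th antiholomorphic derivative `∂g/∂ζ̄_t` of a scalar function on `ℂⁿ`. -/
def dbarDir (n : ℕ) (t : Fin n) (g : (Fin n → ℂ) → ℂ) (z : Fin n → ℂ) : ℂ :=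
  (fderiv ℝ g z (Pi.single t 1) + I * fderiv ℝ g z (Pi.single t I)) / 2

variable (n m r : ℕ) (f : Fin r → Fin m → (Fin n → ℂ) → ℂ)

/-- The matrix `f f*`. -/
def gram (z : Fin n → ℂ) : Matrix (Fin r) (Fin r) ℂ :=
  Matrix.of fun k l => ∑ i, f k i z * (starRingEnd ℂ) (f l i z)

/-- The entries of the minimal right inverse `σ = f*(f f*)⁻¹` of `f`;
`σ j` is the section of `E` with minimal norm such that `f_k (σ_j) = δ_{jk}`. -/
def minimalSigma (j : Fin r) (i : Fin m) (z : Fin n → ℂ) : ℂ :=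
  ∑ l, (starRingEnd ℂ) (f l i z) * ((gram n m r f z)⁻¹ l j)

/-- `σ_j` as an element of the model exterior algebra. -/
def sigmaEl (j : Fin r) (z : Fin n → ℂ) : EA m n :=
  ∑ i, minimalSigma n m r f j i z • ExteriorAlgebra.ι ℂ (eVec m n i)

/-- `∂̄σ_j = ∑_{t,i} (∂σ_j^i/∂ζ̄_t) dζ̄_t ∧ e_i` as an element of the model algebra. -/
def dbarSigmaEl (j : Fin r) (z : Fin n → ℂ) : EA m n :=
  ∑ t, ∑ i, dbarDir n t (minimalSigma n m r f j i) z •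
    (ExteriorAlgebra.ι ℂ (xiVec m n t) * ExteriorAlgebra.ι ℂ (eVec m n i))

/-- The form `u_k = σ₁ ∧ ⋯ ∧ σ_r ∧ (∂̄σ)^{⊗(k−1)} ⊗ ε*`, a `(0,k−1)`-form with values
in `Λ^{r+k-1}E ⊗ S^{k-1}Q* ⊗ det Q*`; its component of multidegree `α` (`|α| = k−1`) is
`σ₁ ∧ ⋯ ∧ σ_r ∧ (∂̄σ₁)^{α₁} ∧ ⋯ ∧ (∂̄σ_r)^{α_r}`. -/
def uForm (k : ℕ) (z : Fin n → ℂ) (α : Fin r → ℕ) : EA m n :=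
  if (∑ j, α j) + 1 = k then
    (List.ofFn fun j : Fin r => sigmaEl n m r f j z).prod *
      (List.ofFn fun j : Fin r => (dbarSigmaEl n m r f j z) ^ (α j)).prod
  else 0

/-- The differential `δ_f = ∑_j δ_{f_j} ⊗ δ_{ε_j}` acting on multidegree-indexed
families. -/
def deltaLow (z : Fin n → ℂ) (V : (Fin r → ℕ) → EA m n) : (Fin r → ℕ) → EA m n :=
  fun α => ∑ j, contrE m n (fun i => f j i z) (V (α + Pi.single j 1))

/-- The augmentation `δ_F = δ_{f_r} ⋯ δ_{f_1} ⊗ δ_{ε_1} ⋯ δ_{ε_r}`. -/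
def deltaTop (z : Fin n → ℂ) (V : (Fin r → ℕ) → EA m n) : EA m n :=
  (List.ofFn fun j : Fin r => contrE m n (fun i => f j i z)).foldl (fun a L => L a) (V 0)

/-- `v` is the `∂̄` of the family `u` on the set `S`: for each multidegree `α` there is
a family of coefficients `w t` such that `v = ∑_t dζ̄_t ∧ w t` on `S` and, tested
against every linear functional, `w t` is the `t`-th antiholomorphic derivative of
`u`. -/
def IsDbarFamOn (S : Set (Fin n → ℂ))
    (u v : (Fin n → ℂ) → (Fin r → ℕ) → EA m n) : Prop :=
  ∀ α : Fin r → ℕ, ∃ w : Fin n → (Fin n → ℂ) → EA m n,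
    (∀ z ∈ S, v z α = ∑ t, ExteriorAlgebra.ι ℂ (xiVec m n t) * w t z) ∧
    ∀ (t : Fin n) (ℓ : EA m n →ₗ[ℂ] ℂ), ∀ z ∈ S,
      ℓ (w t z) = dbarDir n t (fun y => ℓ (u y α)) z

/-! Interior multiplication by `f_k` sends `σ_j` to the constant `δ_{jk}`, hence annihilates every
`∂̄σ_j`. The forms `∂̄σ_j` are moreover `∂̄`-closed and, being of even degree, central, so both
`δ_f` and `∂̄` act only on the factor `σ₁ ∧ ⋯ ∧ σ_r` of `u_k`. On that factor
`∑_j ∂̄σ_j ∧ δ_{f_j}` and `∂̄` are odd derivations which agree on each `σ_j`. -/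

section CliffordAlgebra

open CliffordAlgebra

variable {R M : Type*} [CommRing R] [AddCommGroup M] [Module R M] {Q : QuadraticForm R M}

theorem contractLeft_mul (d : Module.Dual R M) (x y : CliffordAlgebra Q) :
    contractLeft d (x * y) = contractLeft d x * y + involute x * contractLeft d y := by
  induction x using CliffordAlgebra.left_induction with
  | algebraMap c =>
    rw [contractLeft_algebraMap_mul, contractLeft_algebraMap, AlgHom.commutes, zero_mul, zero_add]
  | add x x' hx hx' => simp only [add_mul, map_add, hx, hx']; abel
  | ι_mul x v hx =>
    rw [mul_assoc, contractLeft_ι_mul, hx, contractLeft_ι_mul, map_mul, involute_ι]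
    simp only [sub_mul, mul_add, smul_mul_assoc, neg_mul, mul_assoc]
    abel

theorem contractLeft_list_prod_eq_zero (d : Module.Dual R M) {l : List (CliffordAlgebra Q)}
    (hl : ∀ x ∈ l, contractLeft d x = 0) : contractLeft d l.prod = 0 := by
  induction l with
  | nil => exact contractLeft_one ..
  | cons x l ih =>
    rw [List.forall_mem_cons] at hl
    rw [List.prod_cons, contractLeft_mul, hl.1, ih hl.2, zero_mul, mul_zero, add_zero]

theorem contractLeft_pow_eq_zero (d : Module.Dual R M) {x : CliffordAlgebra Q}
    (hx : contractLeft d x = 0) (k : ℕ) : contractLeft d (x ^ k) = 0 := by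
  rw [← List.prod_replicate]
  exact contractLeft_list_prod_eq_zero d fun y hy => (List.eq_of_mem_replicate hy).symm ▸ hx

theorem foldl_contractLeft_prod_map_ι {κ : Type*} [DecidableEq κ] {d : κ → Module.Dual R M}
    {v : κ → M} (hdv : ∀ i j, d i (v j) = if i = j then 1 else 0) {l : List κ} (hl : l.Nodup) :
    l.foldl (fun a j => contractLeft (d j) a) (l.map fun j => ι Q (v j)).prod = 1 := by
  induction l with
  | nil => rfl
  | cons a l ih =>
    obtain ⟨ha, hl⟩ := List.nodup_cons.1 hl
    have hrest : contractLeft (d a) (l.map fun j => ι Q (v j)).prod = 0 :=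
      contractLeft_list_prod_eq_zero _ <| List.forall_mem_map.2 fun j hj => by
        rw [contractLeft_ι, hdv, if_neg (ne_of_mem_of_not_mem hj ha).symm, map_zero]
    rw [List.map_cons, List.prod_cons, List.foldl_cons, contractLeft_ι_mul, hrest, hdv,
      if_pos rfl, one_smul, mul_zero, sub_zero, ih hl]

end CliffordAlgebra

section ExteriorAlgebra

open ExteriorAlgebra
open CliffordAlgebra (involute involute_ι involute_involute)

variable {R M : Type*} [CommRing R] [AddCommGroup M] [Module R M]

theorem ι_mul_ι_eq_neg (v w : M) : ι R v * ι R w = -(ι R w * ι R v) :=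
  eq_neg_of_add_eq_zero_left (ι_add_mul_swap v w)

theorem ι_mul_eq_involute_mul_ι (v : M) (x : ExteriorAlgebra R M) :
    ι R v * x = involute x * ι R v := by
  induction x using CliffordAlgebra.left_induction with
  | algebraMap c => rw [AlgHom.commutes, Algebra.commutes]
  | add x y hx hy => rw [mul_add, hx, hy, map_add, add_mul]
  | ι_mul x w hx =>
    rw [map_mul, involute_ι, ← mul_assoc, ι_mul_ι_eq_neg, neg_mul, mul_assoc, hx, neg_mul,
      neg_mul, mul_assoc]

theorem commute_ι_mul_ι (v w : M) (x : ExteriorAlgebra R M) : Commute (ι R v * ι R w) x := by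
  rw [commute_iff_eq, mul_assoc, ι_mul_eq_involute_mul_ι w, ← mul_assoc,
    ι_mul_eq_involute_mul_ι v, involute_involute, mul_assoc]

theorem sum_sum_smul_ι_mul_ι_eq_zero {κ : Type*} [Fintype κ] (v : κ → M) {c : κ → κ → R}
    (hc : ∀ s t, c s t = c t s) : ∑ s, ∑ t, c s t • (ι R (v s) * ι R (v t)) = 0 := by
  rw [← Fintype.sum_prod_type']
  refine Finset.sum_involution (fun p _ => p.swap) (fun p _ => ?_) (fun p _ hp hswap => hp ?_)
    (fun _ _ => Finset.mem_univ _) (fun p _ => p.swap_swap)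
  · rw [Prod.fst_swap, Prod.snd_swap, hc, ι_mul_ι_eq_neg, smul_neg, neg_add_cancel]
  · rw [show p.1 = p.2 from congrArg Prod.snd hswap, ι_sq_zero, smul_zero]

instance instFiniteExteriorAlgebra [Module.Free R M] [Module.Finite R M] :
    Module.Finite R (ExteriorAlgebra R M) :=
  .of_basis ((Module.Free.chooseBasis R M).reindex (Fintype.equivFin _)).ExteriorAlgebra

end ExteriorAlgebra

theorem prod_ofFn_pow_add_single {M : Type*} [Monoid M] {r : ℕ} {b : Fin r → M}
    (hb : ∀ i j, Commute (b i) (b j)) (α : Fin r → ℕ) (j : Fin r) :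
    (List.ofFn fun i => b i ^ (α + Pi.single j 1 : Fin r → ℕ) i).prod =
      b j * (List.ofFn fun i => b i ^ α i).prod := by
  induction r with
  | zero => exact j.elim0
  | succ r ih =>
    simp only [List.ofFn_succ, List.prod_cons, Pi.add_apply]
    cases j using Fin.cases with
    | zero => simp [pow_succ', mul_assoc]
    | succ j =>
      have htail := ih (b := fun i => b i.succ) (fun i k => hb _ _) (fun i => α i.succ) j
      simp only [Pi.add_apply] at htail
      simp only [Pi.single_apply, Fin.succ_inj, (Fin.succ_ne_zero j).symm, if_false,
        add_zero] at htail ⊢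
      rw [htail, ← mul_assoc, ← mul_assoc, ((hb 0 j.succ).pow_left (α 0)).eq]

section ContDiff

variable {𝕜 E ι : Type*} [NontriviallyNormedField 𝕜] [NormedAddCommGroup E] [NormedSpace 𝕜 E]
  [Fintype ι] [DecidableEq ι] {N : WithTop ℕ∞} {z : E}

theorem contDiffAt_matrix_det {A : Type*} [NormedCommRing A] [NormedAlgebra 𝕜 A]
    {M : E → Matrix ι ι A} (hM : ∀ i j, ContDiffAt 𝕜 N (fun y => M y i j) z) :
    ContDiffAt 𝕜 N (fun y => (M y).det) z := by
  simp only [Matrix.det_apply']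
  exact ContDiffAt.sum fun σ _ => contDiffAt_const.mul (contDiffAt_prod fun i _ => hM _ _)

theorem contDiffAt_matrix_inv {K : Type*} [NormedField K] [NormedAlgebra 𝕜 K]
    {M : E → Matrix ι ι K} (hM : ∀ i j, ContDiffAt 𝕜 N (fun y => M y i j) z)
    (hdet : (M z).det ≠ 0) (i j : ι) : ContDiffAt 𝕜 N (fun y => (M y)⁻¹ i j) z := by
  simp only [Matrix.inv_def, Matrix.smul_apply, smul_eq_mul, Ring.inverse_eq_inv',
    Matrix.adjugate_apply]
  refine ((contDiffAt_matrix_det hM).inv hdet).mul (contDiffAt_matrix_det fun k l => ?_)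
  simp only [Matrix.updateRow_apply]
  split_ifs
  · exact contDiffAt_const
  · exact hM k l

end ContDiff

section DbarDir

variable {n} {t : Fin n} {z : Fin n → ℂ} {g h : (Fin n → ℂ) → ℂ}

theorem dbarDir_const (c : ℂ) : dbarDir n t (fun _ => c) z = 0 := by
  simp [dbarDir]

theorem dbarDir_congr (hgh : g =ᶠ[nhds z] h) : dbarDir n t g z = dbarDir n t h z := by
  rw [dbarDir, dbarDir, hgh.fderiv_eq]

theorem dbarDir_mul (hg : DifferentiableAt ℝ g z) (hh : DifferentiableAt ℝ h z) :
    dbarDir n t (fun y => g y * h y) z = dbarDir n t g z * h z + g z * dbarDir n t h z := by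
  simp only [dbarDir, fderiv_fun_mul hg hh, add_apply,
    smul_apply, smul_eq_mul]
  ring

theorem dbarDir_sum {κ : Type*} {s : Finset κ} {g : κ → (Fin n → ℂ) → ℂ}
    (hg : ∀ i ∈ s, DifferentiableAt ℝ (g i) z) :
    dbarDir n t (fun y => ∑ i ∈ s, g i y) z = ∑ i ∈ s, dbarDir n t (g i) z := by
  simp only [dbarDir, fderiv_fun_sum hg, sum_apply, Finset.mul_sum,
    ← Finset.sum_add_distrib, Finset.sum_div]

theorem dbarDir_eq_zero_of_differentiableAt (hg : DifferentiableAt ℂ g z) :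
    dbarDir n t g z = 0 := by
  have hI : (Pi.single t I : Fin n → ℂ) = I • Pi.single t 1 := by
    rw [← Pi.single_smul, smul_eq_mul, mul_one]
  rw [dbarDir, hg.fderiv_restrictScalars ℝ, hI]
  simp only [ContinuousLinearMap.coe_restrictScalars', map_smul, smul_eq_mul, ← mul_assoc,
    I_mul_I]
  ring

theorem hasFDerivAt_dbarDir (hg : DifferentiableAt ℝ (fderiv ℝ g) z) :
    HasFDerivAt (dbarDir n t g)
      ((2⁻¹ : ℂ) • ((fderiv ℝ (fderiv ℝ g) z).flip (Pi.single t 1) +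
        I • (fderiv ℝ (fderiv ℝ g) z).flip (Pi.single t I))) z := by
  have happly (v : Fin n → ℂ) :
      HasFDerivAt (fun y => fderiv ℝ g y v) ((fderiv ℝ (fderiv ℝ g) z).flip v) z := by
    simpa using hg.hasFDerivAt.clm_apply (hasFDerivAt_const v z)
  refine (((happly (Pi.single t 1)).add ((happly (Pi.single t I)).const_mul I)).const_mul
    (2⁻¹ : ℂ)).congr_of_eventuallyEq (.of_forall fun y => ?_)
  simp [dbarDir, div_eq_inv_mul]

theorem dbarDir_dbarDir_comm (hg : ContDiffAt ℝ 2 g z) (s t : Fin n) :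
    dbarDir n t (dbarDir n s g) z = dbarDir n s (dbarDir n t g) z := by
  have hd : DifferentiableAt ℝ (fderiv ℝ g) z :=
    (hg.fderiv_right (m := 1) (by norm_num)).differentiableAt one_ne_zero
  have hsymm : IsSymmSndFDerivAt ℝ g z := hg.isSymmSndFDerivAt (by simp)
  rw [dbarDir, (hasFDerivAt_dbarDir hd).fderiv, dbarDir, (hasFDerivAt_dbarDir hd).fderiv]
  simp only [smul_apply, add_apply,
    ContinuousLinearMap.flip_apply, smul_eq_mul]
  rw [hsymm (Pi.single t 1) (Pi.single s 1), hsymm (Pi.single t 1) (Pi.single s I),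
    hsymm (Pi.single t I) (Pi.single s 1), hsymm (Pi.single t I) (Pi.single s I)]
  ring

end DbarDir

section HasDbarDirAt

variable {n} {t : Fin n} {z : Fin n → ℂ} {A : Type*}

/-- `u'` is the derivative `∂u/∂ζ̄_t` at `z` of the vector-valued function `u`. It is tested on
linear functionals, so that `A` needs no norm; differentiability is required because `dbarDir` of
a non-differentiable function is `0`. -/
def HasDbarDirAt [AddCommGroup A] [Module ℂ A] (t : Fin n) (u : (Fin n → ℂ) → A) (u' : A)
    (z : Fin n → ℂ) : Prop :=
  ∀ ℓ : A →ₗ[ℂ] ℂ,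
    DifferentiableAt ℝ (fun y => ℓ (u y)) z ∧ dbarDir n t (fun y => ℓ (u y)) z = ℓ u'

namespace HasDbarDirAt

section Module

variable [AddCommGroup A] [Module ℂ A]

theorem const (a : A) : HasDbarDirAt t (fun _ => a) 0 z := fun ℓ =>
  ⟨differentiableAt_const _, by rw [dbarDir_const, map_zero]⟩

theorem smul_const {g : (Fin n → ℂ) → ℂ} (hg : DifferentiableAt ℝ g z) (a : A) :
    HasDbarDirAt t (fun y => g y • a) (dbarDir n t g z • a) z := fun ℓ => by
  simp only [map_smul, smul_eq_mul]
  exact ⟨hg.mul_const _, by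
    rw [dbarDir_mul hg (differentiableAt_const _), dbarDir_const, mul_zero, add_zero]⟩

theorem sum {κ : Type*} {s : Finset κ} {u : κ → (Fin n → ℂ) → A} {u' : κ → A}
    (hu : ∀ i ∈ s, HasDbarDirAt t (u i) (u' i) z) :
    HasDbarDirAt t (fun y => ∑ i ∈ s, u i y) (∑ i ∈ s, u' i) z := fun ℓ => by
  simp only [map_sum]
  exact ⟨.fun_sum fun i hi => (hu i hi ℓ).1, by
    rw [dbarDir_sum fun i hi => (hu i hi ℓ).1]
    exact Finset.sum_congr rfl fun i hi => (hu i hi ℓ).2⟩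

end Module

theorem mul [Ring A] [Algebra ℂ A] [Module.Finite ℂ A] {u v : (Fin n → ℂ) → A} {u' v' : A}
    (hu : HasDbarDirAt t u u' z) (hv : HasDbarDirAt t v v' z) :
    HasDbarDirAt t (u * v) (u' * v z + u z * v') z := by
  let b := Module.finBasis ℂ A
  have hexpand (x y : A) :
      x * y = ∑ i, ∑ j, (b.coord i x * b.coord j y) • (b i * b j) := by
    conv_lhs => rw [← b.sum_repr x, ← b.sum_repr y]
    simp only [Finset.sum_mul_sum, smul_mul_smul_comm, Module.Basis.coord_apply]
  have hcoord : HasDbarDirAt t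
      (fun y => ∑ i, ∑ j, (b.coord i (u y) * b.coord j (v y)) • (b i * b j)) _ z :=
    sum fun i _ => sum fun j _ => smul_const ((hu (b.coord i)).1.fun_mul (hv (b.coord j)).1) _
  convert hcoord using 1
  · exact funext fun y => hexpand (u y) (v y)
  · simp only [dbarDir_mul (hu _).1 (hv _).1, (hu _).2, (hv _).2, add_smul,
      Finset.sum_add_distrib, ← hexpand]

end HasDbarDirAt

end HasDbarDirAt

section HasDbarAt

open CliffordAlgebra (involute)
open ExteriorAlgebra (ι)

variable {n m} {z : Fin n → ℂ}

/-- `D` is the value at `z` of `∂̄u = ∑_t dζ̄_t ∧ ∂u/∂ζ̄_t`. -/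
def HasDbarAt (u : (Fin n → ℂ) → EA m n) (D : EA m n) (z : Fin n → ℂ) : Prop :=
  ∃ u' : Fin n → EA m n, (∀ t, HasDbarDirAt t u (u' t) z) ∧ D = ∑ t, ι ℂ (xiVec m n t) * u' t

namespace HasDbarAt

theorem const (a : EA m n) : HasDbarAt (fun _ => a) 0 z :=
  ⟨0, fun _ => .const a, by simp⟩

theorem smul_const {g : (Fin n → ℂ) → ℂ} (hg : DifferentiableAt ℝ g z) (a : EA m n) :
    HasDbarAt (fun y => g y • a) (∑ t, dbarDir n t g z • (ι ℂ (xiVec m n t) * a)) z :=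
  ⟨_, fun _ => .smul_const hg a, by simp only [mul_smul_comm]⟩

theorem sum {κ : Type*} {s : Finset κ} {u : κ → (Fin n → ℂ) → EA m n} {D : κ → EA m n}
    (hu : ∀ i, HasDbarAt (u i) (D i) z) :
    HasDbarAt (fun y => ∑ i ∈ s, u i y) (∑ i ∈ s, D i) z := by
  choose u' hu' hD using hu
  refine ⟨fun t => ∑ i ∈ s, u' i t, fun t => .sum fun i _ => hu' i t, ?_⟩
  simp only [hD, Finset.mul_sum]
  exact Finset.sum_comm

theorem mul {u v : (Fin n → ℂ) → EA m n} {D D' : EA m n} (hu : HasDbarAt u D z)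
    (hv : HasDbarAt v D' z) : HasDbarAt (u * v) (D * v z + involute (u z) * D') z := by
  obtain ⟨u', hu, rfl⟩ := hu
  obtain ⟨v', hv, rfl⟩ := hv
  refine ⟨_, fun t => (hu t).mul (hv t), ?_⟩
  simp only [mul_add, Finset.sum_add_distrib, Finset.sum_mul, Finset.mul_sum, ← mul_assoc,
    ι_mul_eq_involute_mul_ι _ (u z)]

theorem list_prod {l : List ((Fin n → ℂ) → EA m n)} (hl : ∀ u ∈ l, HasDbarAt u 0 z) :
    HasDbarAt l.prod 0 z := by
  induction l with
  | nil => exact const 1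
  | cons u l ih =>
    rw [List.forall_mem_cons] at hl
    simpa using hl.1.mul (ih hl.2)

theorem pow {u : (Fin n → ℂ) → EA m n} (hu : HasDbarAt u 0 z) (k : ℕ) :
    HasDbarAt (u ^ k) 0 z := by
  rw [← List.prod_replicate]
  exact list_prod fun v hv => List.eq_of_mem_replicate hv ▸ hu

theorem sum_dbarDir_smul {g : (Fin n → ℂ) → ℂ} (hg : ContDiffAt ℝ 2 g z) (a : EA m n) :
    HasDbarAt (fun y => ∑ s, dbarDir n s g y • (ι ℂ (xiVec m n s) * a)) 0 z := by
  have hd : DifferentiableAt ℝ (fderiv ℝ g) z :=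
    (hg.fderiv_right (m := 1) (by norm_num)).differentiableAt one_ne_zero
  have hsum := sum (s := Finset.univ) fun s =>
    smul_const (hasFDerivAt_dbarDir (t := s) hd).differentiableAt (ι ℂ (xiVec m n s) * a)
  convert hsum using 1
  have hdd := sum_sum_smul_ι_mul_ι_eq_zero (xiVec m n)
    fun t s => dbarDir_dbarDir_comm (t := t) (s := s) hg
  rw [Finset.sum_comm, ← zero_mul a, ← hdd]
  simp only [Finset.sum_mul, smul_mul_assoc, mul_assoc]

theorem prod_map_ι {κ : Type*} [Fintype κ] [DecidableEq κ]
    {v : κ → (Fin n → ℂ) → (Fin m → ℂ) × (Fin n → ℂ)} {b : κ → EA m n}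
    (hv : ∀ j, HasDbarAt (fun y => ι ℂ (v j y)) (b j) z) (hb : ∀ j x, Commute (b j) x)
    {d : κ → Module.Dual ℂ ((Fin m → ℂ) × (Fin n → ℂ))}
    (hdv : ∀ i j, d i (v j z) = if i = j then 1 else 0) (l : List κ) :
    HasDbarAt (fun y => (l.map fun j => ι ℂ (v j y)).prod)
      (∑ j, b j * CliffordAlgebra.contractLeft (d j) (l.map fun j => ι ℂ (v j z)).prod) z := by
  induction l with
  | nil => simpa [CliffordAlgebra.contractLeft_one] using const 1
  | cons a l ih =>
    simp only [List.map_cons, List.prod_cons]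
    convert (hv a).mul ih using 1
    · rfl
    set p := (l.map fun j => ι ℂ (v j z)).prod
    have hterm (j : κ) : b j * CliffordAlgebra.contractLeft (d j) (ι ℂ (v a z) * p) =
        (if j = a then b j * p else 0) -
          ι ℂ (v a z) * (b j * CliffordAlgebra.contractLeft (d j) p) := by
      rw [CliffordAlgebra.contractLeft_ι_mul, hdv, ite_smul, one_smul, zero_smul, mul_sub, mul_ite,
        mul_zero, (hb j _).left_comm]
    rw [Finset.sum_congr rfl fun j _ => hterm j, Finset.sum_sub_distrib, Fintype.sum_ite_eq',
      ← Finset.mul_sum, CliffordAlgebra.involute_ι, neg_mul, sub_eq_add_neg]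

end HasDbarAt

variable {r} {S : Set (Fin n → ℂ)} {u v v' : (Fin n → ℂ) → (Fin r → ℕ) → EA m n}

theorem isDbarFamOn_of_hasDbarAt
    (h : ∀ z ∈ S, ∀ α, HasDbarAt (fun y => u y α) (v z α) z) : IsDbarFamOn n m r S u v := by
  intro α
  choose! w hw hv using fun z hz => h z hz α
  exact ⟨fun t z => w z t, hv, fun t ℓ z hz => (hw z hz t ℓ).2.symm⟩

theorem IsDbarFamOn.unique (hv : IsDbarFamOn n m r S u v) (hv' : IsDbarFamOn n m r S u v')
    (hz : z ∈ S) : v z = v' z := by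
  funext α
  obtain ⟨w, hvw, hw⟩ := hv α
  obtain ⟨w', hvw', hw'⟩ := hv' α
  have hww' (t : Fin n) : w t z = w' t z := by
    rw [← sub_eq_zero, ← Module.forall_dual_apply_eq_zero_iff ℂ]
    intro ℓ
    rw [map_sub, hw t ℓ z hz, hw' t ℓ z hz, sub_self]
  simp only [hvw z hz, hvw' z hz, hww']

end HasDbarAt

section MinimalRightInverse

variable {n m r f} {z : Fin n → ℂ}

open scoped Matrix

theorem gram_eq_mul_conjTranspose :
    gram n m r f z = (Matrix.of fun j i => f j i z) * (Matrix.of fun j i => f j i z)ᴴ := by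
  ext k l
  simp [gram, Matrix.mul_apply]

open scoped ComplexOrder in
theorem gram_det_ne_zero
    (hsurj : Function.Surjective (Matrix.mulVecLin (Matrix.of fun j i => f j i z))) :
    (gram n m r f z).det ≠ 0 := by
  obtain ⟨B, hB⟩ := Matrix.mulVec_surjective_iff_exists_right_inverse.1 hsurj
  have hinj : Function.Injective (Matrix.vecMul · (Matrix.of fun j i => f j i z)) :=
    Function.LeftInverse.injective (g := (Matrix.vecMul · B)) fun x => by
      change x ᵥ* _ ᵥ* B = x
      rw [Matrix.vecMul_vecMul, hB, Matrix.vecMul_one]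
  rw [gram_eq_mul_conjTranspose]
  exact (Matrix.PosDef.mul_conjTranspose_self _ hinj).det_pos.ne'

theorem sum_mul_minimalSigma (hdet : (gram n m r f z).det ≠ 0) (k j : Fin r) :
    ∑ i, f k i z * minimalSigma n m r f j i z = if k = j then 1 else 0 := by
  have hinv : gram n m r f z * (gram n m r f z)⁻¹ = 1 :=
    Matrix.mul_nonsing_inv _ hdet.isUnit
  nth_rw 1 [gram_eq_mul_conjTranspose] at hinv
  rw [Matrix.mul_assoc] at hinv
  simpa [Matrix.mul_apply, Matrix.one_apply, minimalSigma] using congr_fun₂ hinv k j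

theorem contDiffAt_gram {N : WithTop ℕ∞} (hf : ∀ j i, ContDiffAt ℝ N (f j i) z) (k l : Fin r) :
    ContDiffAt ℝ N (fun y => gram n m r f y k l) z := by
  simp only [gram, Matrix.of_apply]
  exact ContDiffAt.sum fun i _ =>
    (hf k i).mul (Complex.conjCLE.contDiff.contDiffAt.comp z (hf l i))

theorem contDiffAt_minimalSigma {N : WithTop ℕ∞} (hf : ∀ j i, ContDiffAt ℝ N (f j i) z)
    (hdet : (gram n m r f z).det ≠ 0) (j : Fin r) (i : Fin m) :
    ContDiffAt ℝ N (minimalSigma n m r f j i) z :=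
  ContDiffAt.sum fun l _ =>
    (Complex.conjCLE.contDiff.contDiffAt.comp z (hf l i)).mul
      (contDiffAt_matrix_inv (contDiffAt_gram hf) hdet l j)

theorem sum_mul_dbarDir_minimalSigma (hf : ∀ j i, AnalyticAt ℂ (f j i) z)
    (hdet : (gram n m r f z).det ≠ 0) (k j : Fin r) (t : Fin n) :
    ∑ i, f k i z * dbarDir n t (minimalSigma n m r f j i) z = 0 := by
  have hfsmooth (j i) : ContDiffAt ℝ 1 (f j i) z := (hf j i).contDiffAt.restrict_scalars ℝ
  have hfdiff (i) : DifferentiableAt ℝ (f k i) z := (hfsmooth k i).differentiableAt one_ne_zero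
  have hσdiff (i) : DifferentiableAt ℝ (minimalSigma n m r f j i) z :=
    (contDiffAt_minimalSigma hfsmooth hdet j i).differentiableAt one_ne_zero
  have hconst : (fun y => ∑ i, f k i y * minimalSigma n m r f j i y) =ᶠ[nhds z]
      fun _ => if k = j then 1 else 0 := by
    filter_upwards [(contDiffAt_matrix_det (contDiffAt_gram hfsmooth)).continuousAt.eventually_ne
      hdet] with y hy using sum_mul_minimalSigma hy k j
  calc ∑ i, f k i z * dbarDir n t (minimalSigma n m r f j i) z
      = ∑ i, dbarDir n t (fun y => f k i y * minimalSigma n m r f j i y) z := by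
        refine Finset.sum_congr rfl fun i _ => ?_
        rw [dbarDir_mul (hfdiff i) (hσdiff i),
          dbarDir_eq_zero_of_differentiableAt (hf k i).differentiableAt, zero_mul, zero_add]
    _ = dbarDir n t (fun y => ∑ i, f k i y * minimalSigma n m r f j i y) z :=
        (dbarDir_sum fun i _ => (hfdiff i).fun_mul (hσdiff i)).symm
    _ = 0 := by rw [dbarDir_congr hconst, dbarDir_const]

end MinimalRightInverse

section Forms

open ExteriorAlgebra (ι)

variable {n m r f} {z : Fin n → ℂ}

theorem dualE_eVec (g : Fin m → ℂ) (i : Fin m) : dualE m n g (eVec m n i) = g i := by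
  simp [dualE, eVec, Pi.single_apply]

theorem dualE_xiVec (g : Fin m → ℂ) (t : Fin n) : dualE m n g (xiVec m n t) = 0 := by
  simp [dualE, xiVec]

theorem contrE_ι_xiVec_mul_ι_eVec (g : Fin m → ℂ) (t : Fin n) (i : Fin m) :
    contrE m n g (ι ℂ (xiVec m n t) * ι ℂ (eVec m n i)) = -(g i • ι ℂ (xiVec m n t)) := by
  rw [contrE, CliffordAlgebra.contractLeft_ι_mul, CliffordAlgebra.contractLeft_ι, dualE_xiVec,
    dualE_eVec, zero_smul, zero_sub, ← Algebra.commutes, ← Algebra.smul_def]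

variable (n m r f) in
/-- The section `σ_j` of `E`, as a vector of `E ⊕ T*₀₁`. -/
def sigmaVec (j : Fin r) (z : Fin n → ℂ) : (Fin m → ℂ) × (Fin n → ℂ) :=
  ∑ i, minimalSigma n m r f j i z • eVec m n i

variable (n m r f) in
/-- The form `σ₁ ∧ ⋯ ∧ σ_r`. -/
def sigmaTop (z : Fin n → ℂ) : EA m n :=
  (List.ofFn fun j : Fin r => sigmaEl n m r f j z).prod

variable (n m r f) in
/-- The form `(∂̄σ₁)^{α₁} ∧ ⋯ ∧ (∂̄σ_r)^{α_r}`, the component of multidegree `α` of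
`(∂̄σ)^{⊗|α|}`. -/
def dbarSigmaPow (α : Fin r → ℕ) (z : Fin n → ℂ) : EA m n :=
  (List.ofFn fun j : Fin r => dbarSigmaEl n m r f j z ^ α j).prod

theorem sigmaEl_eq_ι (j : Fin r) : sigmaEl n m r f j z = ι ℂ (sigmaVec n m r f j z) := by
  simp only [sigmaEl, sigmaVec, map_sum, map_smul]

theorem sigmaTop_eq_prod_map_ι :
    sigmaTop n m r f z = ((List.finRange r).map fun j => ι ℂ (sigmaVec n m r f j z)).prod := by
  simp only [sigmaTop, sigmaEl_eq_ι, List.ofFn_eq_map]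

theorem uForm_eq_mul {k : ℕ} {α : Fin r → ℕ} (hα : ∑ j, α j + 1 = k) :
    uForm n m r f k z α = sigmaTop n m r f z * dbarSigmaPow n m r f α z :=
  if_pos hα

theorem uForm_eq_zero {k : ℕ} {α : Fin r → ℕ} (hα : ∑ j, α j + 1 ≠ k) :
    uForm n m r f k z α = 0 :=
  if_neg hα

theorem dualE_sigmaVec (hdet : (gram n m r f z).det ≠ 0) (k j : Fin r) :
    dualE m n (fun i => f k i z) (sigmaVec n m r f j z) = if k = j then 1 else 0 := by
  rw [← sum_mul_minimalSigma hdet]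
  simp only [sigmaVec, map_sum, map_smul, dualE_eVec, smul_eq_mul, mul_comm]

theorem commute_dbarSigmaEl (j : Fin r) (x : EA m n) : Commute (dbarSigmaEl n m r f j z) x :=
  Commute.sum_left _ _ _ fun _ _ => Commute.sum_left _ _ _ fun _ _ =>
    (commute_ι_mul_ι _ _ x).smul_left _

theorem dbarSigmaPow_add_single (α : Fin r → ℕ) (j : Fin r) :
    dbarSigmaPow n m r f (α + Pi.single j 1) z =
      dbarSigmaEl n m r f j z * dbarSigmaPow n m r f α z :=
  prod_ofFn_pow_add_single (fun i _ => commute_dbarSigmaEl i _) α j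

theorem contrE_dbarSigmaEl (hf : ∀ j i, AnalyticAt ℂ (f j i) z)
    (hdet : (gram n m r f z).det ≠ 0) (k j : Fin r) :
    contrE m n (fun i => f k i z) (dbarSigmaEl n m r f j z) = 0 := by
  simp only [dbarSigmaEl, map_sum, map_smul, contrE_ι_xiVec_mul_ι_eVec, smul_neg, smul_smul,
    Finset.sum_neg_distrib, ← Finset.sum_smul, mul_comm (dbarDir n _ _ z),
    sum_mul_dbarDir_minimalSigma hf hdet, zero_smul, Finset.sum_const_zero, neg_zero]

theorem contrE_dbarSigmaPow (hf : ∀ j i, AnalyticAt ℂ (f j i) z)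
    (hdet : (gram n m r f z).det ≠ 0) (k : Fin r) (α : Fin r → ℕ) :
    contrE m n (fun i => f k i z) (dbarSigmaPow n m r f α z) = 0 :=
  contractLeft_list_prod_eq_zero _ <| List.forall_mem_ofFn_iff.2 fun j =>
    contractLeft_pow_eq_zero _ (contrE_dbarSigmaEl hf hdet k j) (α j)

theorem hasDbarAt_sigmaEl (hf : ∀ j i, ContDiffAt ℝ 1 (f j i) z)
    (hdet : (gram n m r f z).det ≠ 0) (j : Fin r) :
    HasDbarAt (sigmaEl n m r f j) (dbarSigmaEl n m r f j z) z := by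
  rw [dbarSigmaEl, Finset.sum_comm]
  exact .sum fun i =>
    .smul_const ((contDiffAt_minimalSigma hf hdet j i).differentiableAt one_ne_zero) _

theorem hasDbarAt_dbarSigmaEl (hf : ∀ j i, ContDiffAt ℝ 2 (f j i) z)
    (hdet : (gram n m r f z).det ≠ 0) (j : Fin r) :
    HasDbarAt (dbarSigmaEl n m r f j) 0 z := by
  have hsum : HasDbarAt (fun y => ∑ i, ∑ t, dbarDir n t (minimalSigma n m r f j i) y •
      (ι ℂ (xiVec m n t) * ι ℂ (eVec m n i))) (∑ _i : Fin m, 0) z :=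
    .sum fun i => .sum_dbarDir_smul (contDiffAt_minimalSigma hf hdet j i) _
  convert hsum using 1
  · exact funext fun y => Finset.sum_comm
  · rw [Finset.sum_const_zero]

theorem hasDbarAt_sigmaTop (hf : ∀ j i, ContDiffAt ℝ 1 (f j i) z)
    (hdet : (gram n m r f z).det ≠ 0) :
    HasDbarAt (sigmaTop n m r f)
      (∑ j, dbarSigmaEl n m r f j z * contrE m n (fun i => f j i z) (sigmaTop n m r f z)) z := by
  simp only [funext fun y => sigmaTop_eq_prod_map_ι (f := f) (z := y)]
  refine .prod_map_ι (fun j => ?_) commute_dbarSigmaEl (dualE_sigmaVec hdet) _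
  simpa only [← sigmaEl_eq_ι] using hasDbarAt_sigmaEl hf hdet j

theorem hasDbarAt_dbarSigmaPow (hf : ∀ j i, ContDiffAt ℝ 2 (f j i) z)
    (hdet : (gram n m r f z).det ≠ 0) (α : Fin r → ℕ) :
    HasDbarAt (dbarSigmaPow n m r f α) 0 z := by
  have hprod : dbarSigmaPow n m r f α =
      (List.ofFn fun j => dbarSigmaEl n m r f j ^ α j).prod := by
    funext y
    rw [Pi.list_prod_apply, List.map_ofFn]
    rfl
  rw [hprod]
  exact .list_prod <| List.forall_mem_ofFn_iff.2 fun j =>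
    (hasDbarAt_dbarSigmaEl hf hdet j).pow (α j)

theorem deltaLow_uForm_succ_eq_mul (hf : ∀ j i, AnalyticAt ℂ (f j i) z)
    (hdet : (gram n m r f z).det ≠ 0) {k : ℕ} {α : Fin r → ℕ} (hα : ∑ j, α j + 1 = k) :
    deltaLow n m r f z (uForm n m r f (k + 1) z) α =
      (∑ j, dbarSigmaEl n m r f j z * contrE m n (fun i => f j i z) (sigmaTop n m r f z)) *
        dbarSigmaPow n m r f α z := by
  rw [deltaLow, Finset.sum_mul]
  refine Finset.sum_congr rfl fun j _ => ?_
  have hdegree : ∑ i, (α + Pi.single j 1 : Fin r → ℕ) i + 1 = k + 1 := by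
    simp [Finset.sum_add_distrib, hα]
  rw [uForm_eq_mul hdegree, contrE, contractLeft_mul, ← contrE, contrE_dbarSigmaPow hf hdet,
    mul_zero, add_zero, dbarSigmaPow_add_single, ← mul_assoc, (commute_dbarSigmaEl j _).eq]

theorem deltaLow_uForm_succ_eq_zero {k : ℕ} {α : Fin r → ℕ} (hα : ∑ j, α j + 1 ≠ k) :
    deltaLow n m r f z (uForm n m r f (k + 1) z) α = 0 := by
  refine Finset.sum_eq_zero fun j _ => ?_
  rw [uForm_eq_zero, map_zero]
  simpa [Finset.sum_add_distrib] using hα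

theorem hasDbarAt_uForm (hf : ∀ j i, AnalyticAt ℂ (f j i) z)
    (hdet : (gram n m r f z).det ≠ 0) (k : ℕ) (α : Fin r → ℕ) :
    HasDbarAt (fun y => uForm n m r f k y α)
      (deltaLow n m r f z (uForm n m r f (k + 1) z) α) z := by
  have hfsmooth (N : ℕ) (j i) : ContDiffAt ℝ N (f j i) z := (hf j i).contDiffAt.restrict_scalars ℝ
  by_cases hα : ∑ j, α j + 1 = k
  · simp only [uForm_eq_mul hα, deltaLow_uForm_succ_eq_mul hf hdet hα]
    have hmul := (hasDbarAt_sigmaTop (hfsmooth 1) hdet).mul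
      (hasDbarAt_dbarSigmaPow (hfsmooth 2) hdet α)
    rwa [mul_zero, add_zero] at hmul
  · simp only [uForm_eq_zero hα, deltaLow_uForm_succ_eq_zero hα]
    exact .const 0

theorem isDbarFamOn_uForm {S : Set (Fin n → ℂ)} (hf : ∀ z ∈ S, ∀ j i, AnalyticAt ℂ (f j i) z)
    (hdet : ∀ z ∈ S, (gram n m r f z).det ≠ 0) (k : ℕ) :
    IsDbarFamOn n m r S (fun z => uForm n m r f k z)
      (fun z => deltaLow n m r f z (uForm n m r f (k + 1) z)) :=
  isDbarFamOn_of_hasDbarAt fun z hz => hasDbarAt_uForm (hf z hz) (hdet z hz) k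

theorem deltaTop_uForm_one (hdet : (gram n m r f z).det ≠ 0) :
    deltaTop n m r f z (uForm n m r f 1 z) = 1 := by
  have hu : uForm n m r f 1 z 0 = sigmaTop n m r f z := by
    rw [uForm_eq_mul (by simp)]
    simp [dbarSigmaPow]
  rw [deltaTop, hu, sigmaTop_eq_prod_map_ι, List.ofFn_eq_map, List.foldl_map]
  exact foldl_contractLeft_prod_map_ι (dualE_sigmaVec hdet) (List.nodup_finRange r)

end Forms

/-- **Proposition (the basic identities for `u_k`).**  Let `f` be a holomorphic, generically
surjective `r × m` matrix on an open `U ⊆ ℂⁿ`, `Z ⊆ U` its degeneracy set, and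
`σ = f*(ff*)⁻¹` the minimal right inverse.  Then on `U ∖ Z`:
`δ_F u₁ = 1`, and `δ_f u_{k+1} = ∂̄ u_k` for all `k ≥ 1`. -/
theorem deltaF_uOne_eq_one_and_delta_u_succ_eq_dbar_u
    (hr : 1 ≤ r) (hrm : r ≤ m)
    (U : Set (Fin n → ℂ)) (hU : IsOpen U)
    (hf : ∀ j i, AnalyticOnNhd ℂ (f j i) U)
    (Z : Set (Fin n → ℂ))
    (hZ : Z = {z ∈ U |
      ¬ Function.Surjective (Matrix.mulVecLin (Matrix.of fun j i => f j i z))})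
    (hgen : ¬ U ⊆ Z) :
    (∀ z ∈ U \ Z, deltaTop n m r f z (uForm n m r f 1 z) = 1) ∧
    (∀ k : ℕ, 1 ≤ k →
      ∀ v : (Fin n → ℂ) → (Fin r → ℕ) → EA m n,
        IsDbarFamOn n m r (U \ Z) (fun z => uForm n m r f k z) v →
        ∀ z ∈ U \ Z, ∀ α : Fin r → ℕ,
          deltaLow n m r f z (uForm n m r f (k + 1) z) α = v z α) := by
  have hdet : ∀ z ∈ U \ Z, (gram n m r f z).det ≠ 0 := fun z hz =>
    gram_det_ne_zero <| not_not.1 fun hns => hz.2 <| hZ ▸ ⟨hz.1, hns⟩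
  refine ⟨fun z hz => deltaTop_uForm_one (hdet z hz), fun k _ v hv z hz α => ?_⟩
  have hδu := isDbarFamOn_uForm (fun z hz j i => hf j i z hz.1) hdet k
  exact congr_fun (hδu.unique hv hz) α

end
end
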